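/- arXiv:1511.05934 — 3 statements merged into one kernel-verified Lean document; each statement's English description precedes it below -/
import Mathlib

section
/- Let ω: R^{n-1} → [0, ∞] be an A_1 Muckenhoupt weight with constant A, i.e. for every ball B, the average of ω over B is at most A·ω(x) for a.e. x ∈ B. Then there exist p = p(A, n) > 1 and C = C(A, n) such that for every ball B, (average of ω^p over B)^{1/p} ≤ C · (average of ω over B) (the reverse Hölder inequality). -/
open MeasureTheory Metric Set Filter ENNReal
open scoped Topology NNReal ENNReal

lemma aux_absorb {X : Type*} [MeasurableSpace X] (μ : Measure X) [IsFiniteMeasure μ]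
    (ω : X → ℝ≥0∞) (hω : Measurable ω) (hint : ∫⁻ x, ω x ∂μ < ⊤) (L A K : ℝ≥0) (hA : 1 ≤ A)
    (h : ∀ t : ℝ, (L : ℝ) ≤ t → 0 < t →
      ∫⁻ x in {x | ENNReal.ofReal t < ω x}, ω x ∂μ ≤
        K * ENNReal.ofReal t * μ {x | ENNReal.ofReal t ≤ A * ω x})
    (δ : ℝ) (hδ : 0 < δ) (hδ1 : δ ≤ 1)
    (hsmall : ENNReal.ofReal δ * K * (A : ℝ≥0∞) ^ 2 ≤ 1 / 2) :
    ∫⁻ x, (ω x) ^ (1 + δ) ∂μ ≤ 2 * ENNReal.ofReal ((L : ℝ) ^ δ) * ∫⁻ x, ω x ∂μ := by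
  set ν := μ.withDensity ω with hν
  have hνu : ν univ = ∫⁻ x, ω x ∂μ := by simp [hν]
  have key : ∀ N : ℕ, ∫⁻ x, ω x * ENNReal.ofReal ((min (ω x) N).toReal ^ δ) ∂μ
      ≤ 2 * ENNReal.ofReal ((L : ℝ) ^ δ) * ∫⁻ x, ω x ∂μ := by
    intro N
    set f : X → ℝ := fun x => (min (ω x) N).toReal with hf
    have hfin : ∀ x, min (ω x) (N : ℝ≥0∞) ≠ ⊤ := fun x =>
      ne_top_of_le_ne_top (ENNReal.natCast_ne_top N) (min_le_right _ _)
    have hof : ∀ x, ENNReal.ofReal (f x) = min (ω x) N := fun x => ENNReal.ofReal_toReal (hfin x)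
    have hf0 : ∀ x, 0 ≤ f x := fun x => ENNReal.toReal_nonneg
    have hfN : ∀ x, f x ≤ N := fun x => by
      have := ENNReal.toReal_mono (ENNReal.natCast_ne_top N) (min_le_right (ω x) (N : ℝ≥0∞))
      simpa using this
    have hfm : Measurable f := (hω.min measurable_const).ennreal_toReal
    set I := ∫⁻ x, ω x * ENNReal.ofReal (f x ^ δ) ∂μ with hI
    have hIfin : I ≠ ⊤ := by
      refine ne_top_of_le_ne_top (b := ENNReal.ofReal ((N : ℝ) ^ δ) * ∫⁻ x, ω x ∂μ)
        (ENNReal.mul_ne_top ENNReal.ofReal_ne_top hint.ne) ?_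
      rw [← lintegral_const_mul _ hω]
      refine lintegral_mono fun x => ?_
      simp only
      rw [mul_comm]
      gcongr
      exact hfN x
    have e1 : I = ∫⁻ x, ENNReal.ofReal (f x ^ δ) ∂ν := by
      rw [hν, lintegral_withDensity_eq_lintegral_mul _ hω (by fun_prop)]; rfl
    rw [lintegral_rpow_eq_lintegral_meas_lt_mul ν (Eventually.of_forall hf0)
      hfm.aemeasurable hδ] at e1
    have e2 := lintegral_rpow_eq_lintegral_meas_lt_mul ν (f := fun _ => (L : ℝ))
      (Eventually.of_forall fun _ => L.coe_nonneg) measurable_const.aemeasurable hδ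
    have e3 := lintegral_rpow_eq_lintegral_meas_le_mul μ (f := fun x => (A : ℝ) * f x)
      (Eventually.of_forall fun x => mul_nonneg A.coe_nonneg (hf0 x))
      (by fun_prop) (p := 1 + δ) (by linarith)
    set J := ∫⁻ x, ENNReal.ofReal (((A : ℝ) * f x) ^ (1 + δ)) ∂μ with hJ
    have hJI : J ≤ (A : ℝ≥0∞) ^ 2 * I := by
      rw [hI, ← lintegral_const_mul _ (by fun_prop)]
      refine lintegral_mono fun x => ?_
      simp only
      have hA1 : (1 : ℝ) ≤ A := by exact_mod_cast hA
      have : ((A : ℝ) * f x) ^ (1 + δ) ≤ (A : ℝ) ^ 2 * (f x * f x ^ δ) := by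
        rw [Real.mul_rpow A.coe_nonneg (hf0 x), Real.rpow_add_of_nonneg (hf0 x) zero_le_one hδ.le,
          Real.rpow_one]
        gcongr
        rw [← Real.rpow_natCast]
        exact Real.rpow_le_rpow_of_exponent_le hA1 (by push_cast; linarith)
      refine (ENNReal.ofReal_le_ofReal this).trans ?_
      rw [ENNReal.ofReal_mul (by positivity), ENNReal.ofReal_mul (hf0 x), hof,
        ENNReal.ofReal_pow A.coe_nonneg, ENNReal.ofReal_coe_nnreal]
      gcongr
      exact min_le_left _ _
    have hlev : ∀ t ∈ Ioi (0 : ℝ), ν {a | t < f a} * ENNReal.ofReal (t ^ (δ - 1)) ≤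
        ν {a : X | t < (L : ℝ)} * ENNReal.ofReal (t ^ (δ - 1)) +
        K * (μ {a | t ≤ A * f a} * ENNReal.ofReal (t ^ (1 + δ - 1))) := by
      intro t ht
      have ht : 0 < t := ht
      by_cases htL : t < L
      · refine le_add_right ?_
        refine mul_le_mul_left (measure_mono fun _ _ => htL) _
      push Not at htL
      refine le_add_left ?_
      have ht' : t ^ (1 + δ - 1) = t * t ^ (δ - 1) := by
        rw [← Real.rpow_one_add' ht.le (by linarith)]; congr 1; ring
      rw [ht', ENNReal.ofReal_mul ht.le]
      have : ν {a | t < f a} ≤ K * ENNReal.ofReal t * μ {a | t ≤ A * f a} := by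
        by_cases htN : (N : ℝ) ≤ t
        · have : {a | t < f a} = ∅ := by
            ext a; simp; exact (hfN a).trans htN
          rw [this]; simp
        push Not at htN
        calc ν {a | t < f a} ≤ ν {x | ENNReal.ofReal t < ω x} := by
              refine measure_mono fun a ha => ?_
              have ha : t < f a := ha
              have := (ENNReal.ofReal_lt_ofReal_iff (ht.trans ha)).2 ha
              rw [hof] at this
              exact this.trans_le (min_le_left _ _)
          _ = ∫⁻ x in {x | ENNReal.ofReal t < ω x}, ω x ∂μ := by
              rw [hν, withDensity_apply _ (measurableSet_lt measurable_const hω)]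
          _ ≤ _ := h t htL ht
          _ ≤ _ := by
              gcongr with a
              intro ha
              have h1 : ENNReal.ofReal t ≤ ENNReal.ofReal (A * f a) := by
                rw [ENNReal.ofReal_mul A.coe_nonneg, hof, ENNReal.ofReal_coe_nnreal]
                rcases le_total (ω a) N with h2 | h2
                · rwa [min_eq_left h2]
                · rw [min_eq_right h2]
                  calc ENNReal.ofReal t ≤ ENNReal.ofReal N := ENNReal.ofReal_le_ofReal htN.le
                    _ = 1 * N := by simp
                    _ ≤ _ := by gcongr; exact_mod_cast hA
              exact (ENNReal.ofReal_le_ofReal_iff (mul_nonneg A.coe_nonneg (hf0 a))).1 h1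
      calc _ ≤ K * ENNReal.ofReal t * μ {a | t ≤ A * f a} * ENNReal.ofReal (t ^ (δ - 1)) := by gcongr
        _ = _ := by ring
    have hmain : I ≤ ENNReal.ofReal ((L : ℝ) ^ δ) * ∫⁻ x, ω x ∂μ + 1 / 2 * I := by
      have hm1 : Measurable fun t : ℝ => μ {a | t ≤ A * f a} := by
        refine Antitone.measurable fun s t hst => measure_mono fun a ha => ?_
        exact le_trans hst ha
      have hm2 : Measurable fun t : ℝ =>
          μ {a | t ≤ A * f a} * ENNReal.ofReal (t ^ (1 + δ - 1)) := hm1.mul (by fun_prop)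
      calc I ≤ ENNReal.ofReal δ * ∫⁻ t in Ioi (0 : ℝ),
            (ν {a : X | t < (L : ℝ)} * ENNReal.ofReal (t ^ (δ - 1)) +
            K * (μ {a | t ≤ A * f a} * ENNReal.ofReal (t ^ (1 + δ - 1)))) := by
            rw [e1]
            refine mul_le_mul_right ?_ _
            exact setLIntegral_mono' measurableSet_Ioi hlev
        _ = ENNReal.ofReal δ * (∫⁻ t in Ioi (0 : ℝ),
              ν {a : X | t < (L : ℝ)} * ENNReal.ofReal (t ^ (δ - 1))) +
            ENNReal.ofReal δ * K * ∫⁻ t in Ioi (0 : ℝ),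
              μ {a | t ≤ A * f a} * ENNReal.ofReal (t ^ (1 + δ - 1)) := by
            rw [lintegral_add_right _ (hm2.const_mul _), lintegral_const_mul _ hm2]
            ring
        _ ≤ _ := by
            rw [← e2, lintegral_const, hνu]
            gcongr ?_ + ?_
            · exact le_rfl
            calc _ ≤ ENNReal.ofReal δ * K * J := by
                  gcongr
                  rw [e3]
                  refine le_mul_of_one_le_left zero_le ?_
                  rw [ENNReal.one_le_ofReal]; linarith
              _ ≤ ENNReal.ofReal δ * K * ((A : ℝ≥0∞) ^ 2 * I) := by gcongr
              _ = ENNReal.ofReal δ * K * (A : ℝ≥0∞) ^ 2 * I := by ring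
              _ ≤ _ := by gcongr
    set Y := ENNReal.ofReal ((L : ℝ) ^ δ) * ∫⁻ x, ω x ∂μ with hY
    have hYfin : Y ≠ ⊤ := ENNReal.mul_ne_top ENNReal.ofReal_ne_top hint.ne
    rw [mul_assoc, ← hY]
    lift I to ℝ≥0 using hIfin with I'
    lift Y to ℝ≥0 using hYfin with Y'
    have h2 : (1 / 2 : ℝ≥0∞) = ((1 / 2 : ℝ≥0) : ℝ≥0∞) := by simp
    rw [h2] at hmain
    norm_cast at hmain ⊢
    rw [← NNReal.coe_le_coe] at hmain ⊢
    push_cast at hmain ⊢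
    linarith
  have hae : ∀ᵐ x ∂μ, ω x < ⊤ := ae_lt_top hω hint.ne
  calc ∫⁻ x, (ω x) ^ (1 + δ) ∂μ
      = ∫⁻ x, liminf (fun N : ℕ => ω x * ENNReal.ofReal ((min (ω x) N).toReal ^ δ)) atTop ∂μ := by
        refine lintegral_congr_ae ?_
        filter_upwards [hae] with x hx
        refine (Tendsto.liminf_eq ?_).symm
        refine tendsto_const_nhds.congr' ?_
        obtain ⟨M, hM⟩ := ENNReal.exists_nat_gt hx.ne
        filter_upwards [eventually_ge_atTop M] with N hN
        have : ω x ≤ N := hM.le.trans (by exact_mod_cast hN)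
        rw [min_eq_left this, ENNReal.rpow_add_of_nonneg _ _ zero_le_one hδ.le, ENNReal.rpow_one,
          ENNReal.toReal_rpow, ENNReal.ofReal_toReal (ENNReal.rpow_ne_top_of_nonneg hδ.le hx.ne)]
    _ ≤ liminf (fun N : ℕ => ∫⁻ x, ω x * ENNReal.ofReal ((min (ω x) N).toReal ^ δ) ∂μ) atTop :=
        lintegral_liminf_le fun N => by fun_prop
    _ ≤ _ := by
        refine (liminf_le_liminf (Eventually.of_forall key)).trans ?_
        simp

abbrev EE (d : ℕ) := EuclideanSpace ℝ (Fin d)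

lemma aux_dbl {d : ℕ} {A : ℝ≥0∞} {ω : EE d → ℝ≥0∞} (hω : Measurable ω)
    (hA1 : ∀ (x : EE d) (r : ℝ), 0 < r → ∀ᵐ y ∂(volume.restrict (ball x r)),
            (∫⁻ z in ball x r, ω z ∂volume) / volume (ball x r) ≤ A * ω y)
    {x y : EE d} {r s : ℝ} (hr : 0 < r) (hs : 0 < s) (hsub : ball y s ⊆ ball x r) :
    (∫⁻ z in ball x r, ω z ∂volume) / volume (ball x r) ≤
      A * ((∫⁻ z in ball y s, ω z ∂volume) / volume (ball y s)) := by
  have h1 := ae_restrict_of_ae_restrict_of_subset hsub (hA1 x r hr)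
  have h2 := lintegral_mono_ae h1
  rw [lintegral_const, lintegral_const_mul _ hω, Measure.restrict_apply_univ] at h2
  rw [← mul_div_assoc, ENNReal.le_div_iff_mul_le
    (Or.inl (measure_ball_pos _ _ hs).ne') (Or.inl measure_ball_lt_top.ne)]
  exact h2

lemma aux_inner {d : ℕ} {x b : EE d} {r s : ℝ} (hs : 0 < s) (hsr : s ≤ r)
    (hb : b ∈ ball x r) : ∃ c, ball c (s / 2) ⊆ ball b s ∩ ball x r := by
  have hr : 0 < r := hs.trans_le hsr
  rw [mem_ball, dist_eq_norm] at hb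
  refine ⟨b + (s / (2 * r)) • (x - b), subset_inter (ball_subset_ball' ?_) (ball_subset_ball' ?_)⟩
  · rw [dist_eq_norm, add_sub_cancel_left, norm_smul, Real.norm_of_nonneg (by positivity),
      norm_sub_rev]
    have : s / (2 * r) * ‖b - x‖ ≤ s / (2 * r) * r := by gcongr
    have e : s / (2 * r) * r = s / 2 := by field_simp
    linarith
  · have h0 : 0 ≤ 1 - s / (2 * r) := by
      rw [sub_nonneg, div_le_one (by positivity)]; linarith
    rw [dist_eq_norm, show b + (s / (2 * r)) • (x - b) - x = (1 - s / (2 * r)) • (b - x) by module,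
      norm_smul, Real.norm_of_nonneg h0]
    have : (1 - s / (2 * r)) * ‖b - x‖ ≤ (1 - s / (2 * r)) * r := by gcongr
    have e : s / (2 * r) * r = s / 2 := by field_simp
    linarith

lemma aux_leb {d : ℕ} {ω : EE d → ℝ≥0∞} (hω : Measurable ω) (x₀ : EE d) (r : ℝ)
    (hint : ∫⁻ y in ball x₀ r, ω y < ⊤) :
    ∀ᵐ x, x ∈ ball x₀ r → Tendsto (fun s => (∫⁻ y in ball x s, ω y) / volume (ball x s))
      (𝓝[>] 0) (𝓝 (ω x)) := by
  have h := (Besicovitch.vitaliFamily (volume : Measure (EE d))).ae_tendsto_lintegral_div'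
    (f := (ball x₀ r).indicator ω) (hω.indicator measurableSet_ball)
    (by rw [lintegral_indicator measurableSet_ball]; exact hint.ne)
  filter_upwards [h] with x hx hxb
  have h2 := hx.comp (Besicovitch.tendsto_filterAt volume x)
  rw [indicator_of_mem hxb] at h2
  refine h2.congr' ?_
  have hlt : 0 < r - dist x x₀ := by rw [mem_ball] at hxb; linarith
  filter_upwards [Ioo_mem_nhdsGT hlt] with s hs
  have hsub : closedBall x s ⊆ ball x₀ r := closedBall_subset_ball' (by linarith [hs.2])
  have hae : (closedBall x s : Set (EE d)) =ᵐ[volume] ball x s := by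
    rw [← ball_union_sphere]
    refine union_ae_eq_left_of_ae_eq_empty ?_
    exact ae_eq_empty.2 (Measure.addHaar_sphere_of_ne_zero _ _ hs.1.ne')
  simp only [Function.comp]
  rw [measure_congr hae, setLIntegral_indicator measurableSet_ball, inter_eq_right.2 hsub,
    setLIntegral_congr hae]

lemma aux_level {d : ℕ} {A : ℝ≥0∞} {ω : EE d → ℝ≥0∞} (hω : Measurable ω)
    (hfin : ∀ (x : EE d) (r : ℝ), 0 < r → ∫⁻ y in ball x r, ω y ∂volume < ⊤)
    (hA1 : ∀ (x : EE d) (r : ℝ), 0 < r → ∀ᵐ y ∂(volume.restrict (ball x r)),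
            (∫⁻ z in ball x r, ω z ∂volume) / volume (ball x r) ≤ A * ω y)
    (x : EE d) (r : ℝ) (hr : 0 < r) (t : ℝ≥0∞)
    (ht : A * ((∫⁻ z in ball x r, ω z ∂volume) / volume (ball x r)) ≤ t) :
    ∫⁻ y in {y | t < ω y} ∩ ball x r, ω y ≤
      A * 12 ^ d * t * volume ({y | t ≤ A * ω y} ∩ ball x r) := by
  set av : EE d → ℝ → ℝ≥0∞ := fun x s => (∫⁻ y in ball x s, ω y) / volume (ball x s) with hav
  set S : Set (EE d) := {y | y ∈ ball x r ∧ ∃ s, 0 < s ∧ s ≤ r ∧ t < av y s ∧ av y (2 * s) ≤ t}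
    with hS
  have hcov : ∀ᵐ y, y ∈ {y | t < ω y} ∩ ball x r → y ∈ S := by
    filter_upwards [aux_leb hω x r (hfin x r hr)] with y hy hyt
    refine ⟨hyt.2, ?_⟩
    have htend : Tendsto (fun k : ℕ => 2 * r * (1 / 2 : ℝ) ^ k) atTop (𝓝[>] 0) := by
      refine tendsto_nhdsWithin_iff.2 ⟨?_, Eventually.of_forall fun k => ?_⟩
      · simpa using (tendsto_pow_atTop_nhds_zero_of_lt_one (r := (1 / 2 : ℝ))
          (by norm_num) (by norm_num)).const_mul (2 * r)
      · simp only [mem_Ioi]; positivity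
    have hev := ((hy hyt.2).comp htend).eventually (lt_mem_nhds hyt.1)
    have hex : ∃ k : ℕ, t < av y (2 * r * (1 / 2 : ℝ) ^ k) := hev.exists
    classical
    have hk := Nat.find_spec hex
    have hmin := fun m => Nat.find_min hex (m := m)
    generalize Nat.find hex = k at hk hmin
    have hk0 : k ≠ 0 := by
      rintro rfl
      refine absurd hk (not_lt.2 (le_trans ?_ ht))
      refine aux_dbl hω hA1 (by positivity) hr ?_
      refine ball_subset_ball' ?_
      have := hyt.2
      rw [mem_ball'] at this
      simp; linarith
    obtain ⟨j, rfl⟩ := Nat.exists_eq_succ_of_ne_zero hk0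
    refine ⟨2 * r * (1 / 2 : ℝ) ^ (j + 1), by positivity, ?_, hk, ?_⟩
    · have : (1 / 2 : ℝ) ^ j ≤ 1 := pow_le_one₀ (by norm_num) (by norm_num)
      rw [pow_succ]; nlinarith
    · have := hmin j (Nat.lt_succ_self j)
      rw [show 2 * (2 * r * (1 / 2 : ℝ) ^ (j + 1)) = 2 * r * (1 / 2 : ℝ) ^ j by ring]
      exact not_lt.1 this
  have hch : ∀ y : EE d, ∃ s, y ∈ S → 0 < s ∧ s ≤ r ∧ t < av y s ∧ av y (2 * s) ≤ t := by
    intro y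
    by_cases hy : y ∈ S
    · obtain ⟨s, hs⟩ := hy.2
      exact ⟨s, fun _ => hs⟩
    · exact ⟨0, fun h => absurd h hy⟩
  choose s hs using hch
  obtain ⟨u, huS, hdisj, hu⟩ := Vitali.exists_disjoint_subfamily_covering_enlargement_closedBall
    S (fun y => y) s r (fun a ha => (hs a ha).2.1) 5 (by norm_num)
  have hdisj' : u.PairwiseDisjoint fun a => ball a (s a) :=
    hdisj.mono fun a => ball_subset_closedBall
  have hcount : u.Countable := hdisj'.countable_of_isOpen (fun _ _ => isOpen_ball)
    fun a ha => ⟨a, mem_ball_self (hs a (huS ha)).1⟩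
  have : Countable u := hcount.to_subtype
  have hm : MeasurableSet {y | t ≤ A * ω y} := measurableSet_le measurable_const (hω.const_mul _)
  have hstep : ∀ b : u, ∫⁻ y in ball (b : EE d) (6 * s b), ω y ≤ A * 12 ^ d * t *
      volume (({y | t ≤ A * ω y} ∩ ball x r) ∩ ball (b : EE d) (s b)) := by
    rintro ⟨b, hb⟩
    obtain ⟨hs0, hsr, hlt, hle⟩ := hs b (huS hb)
    simp only
    have h1 : av b (6 * s b) ≤ A * t := by
      refine (aux_dbl hω hA1 (y := b) (s := 2 * s b) (by positivity) (by positivity)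
        (ball_subset_ball (by linarith))).trans ?_
      gcongr
    obtain ⟨c, hc⟩ := aux_inner hs0 hsr (huS hb).1
    have hv : volume (ball b (6 * s b)) = 12 ^ d * volume (ball c (s b / 2)) := by
      rw [Measure.addHaar_ball_of_pos _ _ (by positivity),
        Measure.addHaar_ball_of_pos _ c (r := s b / 2) (by positivity), ← mul_assoc]
      congr 1
      rw [finrank_euclideanSpace_fin, show (12 : ℝ≥0∞) ^ d = ENNReal.ofReal (12 ^ d) by
        rw [ENNReal.ofReal_pow (by norm_num)]; norm_num, ← ENNReal.ofReal_mul (by positivity),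
        ← mul_pow]
      congr 2; ring
    have hv2 : volume (ball c (s b / 2)) ≤
        volume (({y | t ≤ A * ω y} ∩ ball x r) ∩ ball b (s b)) := by
      refine measure_mono_ae ?_
      have := (ae_restrict_iff' measurableSet_ball).1 (hA1 b (s b) hs0)
      filter_upwards [this] with y hy hyc
      have := hc hyc
      exact ⟨⟨hlt.le.trans (hy this.1), this.2⟩, this.1⟩
    have h2 := (ENNReal.div_le_iff_le_mul (Or.inl (measure_ball_pos _ _ (by positivity)).ne')
      (Or.inl measure_ball_lt_top.ne)).1 h1
    refine h2.trans ?_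
    rw [hv]
    calc _ = A * 12 ^ d * t * volume (ball c (s b / 2)) := by ring
      _ ≤ _ := by gcongr
  calc ∫⁻ y in {y | t < ω y} ∩ ball x r, ω y
      ≤ ∫⁻ y in ⋃ b : u, ball (b : EE d) (6 * s b), ω y := by
        refine lintegral_mono' (Measure.restrict_mono_ae ?_) le_rfl
        filter_upwards [hcov] with y hy hyt
        obtain ⟨b, hb, hsub⟩ := hu y (hy hyt)
        have := hsub (mem_closedBall_self (hs y (hy hyt)).1.le)
        refine mem_iUnion.2 ⟨⟨b, hb⟩, ?_⟩
        exact closedBall_subset_ball (by linarith [(hs b (huS hb)).1]) this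
    _ ≤ ∑' b : u, ∫⁻ y in ball (b : EE d) (6 * s b), ω y := lintegral_iUnion_le _ _
    _ ≤ ∑' b : u, A * 12 ^ d * t *
      volume (({y | t ≤ A * ω y} ∩ ball x r) ∩ ball (b : EE d) (s b)) := ENNReal.tsum_le_tsum hstep
    _ = A * 12 ^ d * t * volume (⋃ b : u,
      (({y | t ≤ A * ω y} ∩ ball x r) ∩ ball (b : EE d) (s b))) := by
        rw [ENNReal.tsum_mul_left, measure_iUnion]
        · intro a b hab
          exact (hdisj' a.2 b.2 (fun h => hab (Subtype.ext h))).mono inter_subset_right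
            inter_subset_right
        · intro b
          exact (hm.inter measurableSet_ball).inter measurableSet_ball
    _ ≤ _ := by
        gcongr
        exact iUnion_subset fun b => inter_subset_left

/-- Reverse Hölder inequality for `A₁` Muckenhoupt weights on `ℝ^{n-1}`:
if for every ball the average of `ω` is at most `A · ω(x)` for a.e. `x` in the ball, then
there are `p = p(A,n) > 1` and `C = C(A,n)` such that for every ball `B`,
`(⨍_B ω^p)^{1/p} ≤ C ⨍_B ω`. Averages are with respect to `(n-1)`-dimensional Lebesgue
measure. -/
theorem stmt_4 (n : ℕ) (A : ℝ≥0∞) (hA : 1 ≤ A) (hAtop : A ≠ ⊤) :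
    ∃ p : ℝ, 1 < p ∧ ∃ C : ℝ≥0∞, C ≠ ⊤ ∧
      ∀ ω : EuclideanSpace ℝ (Fin (n-1)) → ℝ≥0∞, Measurable ω →
        (∀ (x : EuclideanSpace ℝ (Fin (n-1))) (r : ℝ), 0 < r →
          ∫⁻ y in ball x r, ω y ∂volume < ⊤) →
        (∀ (x : EuclideanSpace ℝ (Fin (n-1))) (r : ℝ), 0 < r →
          ∀ᵐ y ∂(volume.restrict (ball x r)),
            (∫⁻ z in ball x r, ω z ∂volume) / volume (ball x r) ≤ A * ω y) →
        ∀ (x : EuclideanSpace ℝ (Fin (n-1))) (r : ℝ), 0 < r →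
          ((∫⁻ z in ball x r, (ω z) ^ p ∂volume) / volume (ball x r)) ^ (1/p)
            ≤ C * ((∫⁻ z in ball x r, ω z ∂volume) / volume (ball x r)) := by
  lift A to ℝ≥0 using hAtop
  have hA' : 1 ≤ A := by exact_mod_cast hA
  generalize n - 1 = d
  set K : ℝ≥0 := A * 12 ^ d with hK
  set D : ℝ≥0 := 2 * K * A ^ 2 with hD
  have hK1 : 1 ≤ K := one_le_mul hA' (one_le_pow₀ (by norm_num))
  have hD1 : 1 ≤ D := by
    have : 1 ≤ A ^ 2 := one_le_pow₀ hA'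
    have := one_le_mul (one_le_mul (show (1 : ℝ≥0) ≤ 2 by norm_num) hK1) this
    exact this
  have hD0 : D ≠ 0 := (zero_lt_one.trans_le hD1).ne'
  set δ : ℝ := ((D⁻¹ : ℝ≥0) : ℝ) with hδ
  have hδ0 : 0 < δ := by rw [hδ]; exact_mod_cast inv_pos.2 (zero_lt_one.trans_le hD1)
  have hδ1 : δ ≤ 1 := by rw [hδ]; exact_mod_cast inv_le_one_of_one_le₀ hD1
  have hsmall : ENNReal.ofReal δ * K * (A : ℝ≥0∞) ^ 2 ≤ 1 / 2 := by
    rw [hδ, ENNReal.ofReal_coe_nnreal, show (1 / 2 : ℝ≥0∞) = ((1 / 2 : ℝ≥0) : ℝ≥0∞) by simp]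
    norm_cast
    rw [← NNReal.coe_le_coe]
    have h1 : (0 : ℝ) < D := by exact_mod_cast zero_lt_one.trans_le hD1
    have h2 : (D : ℝ) = 2 * K * A ^ 2 := by rw [hD]; push_cast; ring
    push_cast
    rw [mul_assoc, inv_mul_le_iff₀ h1, h2]
    apply le_of_eq; ring
  refine ⟨1 + δ, by linarith, 2 * A, ENNReal.mul_ne_top (by simp) (by simp), ?_⟩
  intro ω hω hfin hA1 x r hr
  have hV0 : volume (ball x r) ≠ 0 := (measure_ball_pos _ _ hr).ne'
  have hVt : volume (ball x r) ≠ ⊤ := measure_ball_lt_top.ne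
  obtain ⟨a, ha⟩ : ∃ a : ℝ≥0, (∫⁻ z in ball x r, ω z) / volume (ball x r) = a :=
    ⟨_, (ENNReal.coe_toNNReal (ENNReal.div_ne_top (hfin x r hr).ne hV0)).symm⟩
  have : IsFiniteMeasure (volume.restrict (ball x r)) := ⟨by simpa using measure_ball_lt_top⟩
  have key := aux_absorb (volume.restrict (ball x r)) ω hω (hfin x r hr) (A * a) A K hA' (by
    intro t hLt ht
    have := aux_level hω hfin hA1 x r hr (ENNReal.ofReal t) (by
      rw [ha, ← ENNReal.coe_mul, ← ENNReal.ofReal_coe_nnreal]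
      exact ENNReal.ofReal_le_ofReal hLt)
    rw [Measure.restrict_restrict (measurableSet_lt measurable_const hω),
      Measure.restrict_apply (measurableSet_le measurable_const (hω.const_mul _))]
    simpa [hK] using this) δ hδ0 hδ1 hsmall
  have h2 : (∫⁻ z in ball x r, (ω z) ^ (1 + δ)) / volume (ball x r) ≤
      ((2 * A * a : ℝ≥0) : ℝ≥0∞) ^ (1 + δ) := by
    calc _ ≤ (2 * ENNReal.ofReal (((A * a : ℝ≥0) : ℝ) ^ δ) * ∫⁻ z in ball x r, ω z) /
          volume (ball x r) := by gcongr
      _ = 2 * ((A * a : ℝ≥0) : ℝ≥0∞) ^ δ * a := by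
          rw [mul_div_assoc, ha, ← ENNReal.ofReal_rpow_of_nonneg (NNReal.coe_nonneg _) hδ0.le,
            ENNReal.ofReal_coe_nnreal]
      _ = (2 * a : ℝ≥0) * ((A * a : ℝ≥0) : ℝ≥0∞) ^ δ := by push_cast; ring
      _ ≤ ((2 * A * a : ℝ≥0) : ℝ≥0∞) * ((2 * A * a : ℝ≥0) : ℝ≥0∞) ^ δ := by
          gcongr ((?_ : ℝ≥0) : ℝ≥0∞) * ((?_ : ℝ≥0) : ℝ≥0∞) ^ δ
          · rw [mul_right_comm]; exact le_mul_of_one_le_right zero_le hA'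
          · rw [mul_assoc]; exact le_mul_of_one_le_left zero_le (by norm_num)
      _ = _ := by
          rw [ENNReal.rpow_add_of_nonneg _ _ zero_le_one hδ0.le, ENNReal.rpow_one]
  rw [ha, one_div, ENNReal.rpow_inv_le_iff (by linarith)]
  refine h2.trans_eq ?_
  push_cast
  rfl
end

section
/- Let u ∈ SBV(R^n), 0 ≤ u ≤ 1, be an inward minimizer of the functional F(v) = ∫|∇v|² dL^n + ∫_{J_v}((v^+)² + (v^-)²) dH^{n-1} + L^n({v>0} \ Ω), where u takes values in {0} ∪ [δ, 1] a.e. for some δ > 0. Then for every ball B_r(x) ⊂ R^n \ Ω, one has H^{n-1}(J_u ∩ B_r(x)) ≤ C(n) δ^{-2} r^{n-1}. -/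
open MeasureTheory Metric Set Filter ENNReal
open scoped Topology NNReal ENNReal RealInnerProductSpace

noncomputable section

abbrev En (n : ℕ) := EuclideanSpace ℝ (Fin n)

variable {n : ℕ}

/-- Divergence of a vector field. -/
def divg (φ : En n → En n) (x : En n) : ℝ :=
  ∑ i, fderiv ℝ φ x (EuclideanSpace.single i 1) i

/-- Total variation of a locally integrable function on a set, defined by duality with
smooth compactly supported vector fields. -/
def varMeas (u : En n → ℝ) (A : Set (En n)) : ℝ≥0∞ :=
  ⨆ φ : {φ : En n → En n // ContDiff ℝ (⊤ : ℕ∞) φ ∧ HasCompactSupport φ ∧ tsupport φ ⊆ A ∧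
      ∀ x, ‖φ x‖ ≤ 1},
    ENNReal.ofReal (∫ x, u x * divg φ.1 x)

/-- Approximate (measure-theoretic) upper limit. -/
def upperLim (u : En n → ℝ) (x : En n) : ℝ :=
  sInf {t : ℝ | Tendsto (fun r : ℝ =>
      (∫ y in ball x r, max (u y - t) 0) / (volume (ball x r)).toReal)
    (𝓝[>] 0) (𝓝 0)}

/-- Approximate (measure-theoretic) lower limit. -/
def lowerLim (u : En n → ℝ) (x : En n) : ℝ :=
  sSup {t : ℝ | Tendsto (fun r : ℝ =>
      (∫ y in ball x r, max (t - u y) 0) / (volume (ball x r)).toReal)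
    (𝓝[>] 0) (𝓝 0)}

/-- The singular (approximate discontinuity) set `S_u`. -/
def singSet (u : En n → ℝ) : Set (En n) := {x | lowerLim u x < upperLim u x}

-- The approximate jump set `J_u`: blow-ups converge in `L¹_loc` to a two-valued
-- function jumping across a hyperplane with normal `ν`.
open Classical in
def jumpSet (u : En n → ℝ) : Set (En n) :=
  {x | ∃ ν : En n, ‖ν‖ = 1 ∧ lowerLim u x < upperLim u x ∧
    ∀ R > (0:ℝ), Tendsto (fun r : ℝ =>
      ∫ y in ball (0 : En n) R,
        |u (x + r • y) - (if 0 < ⟪ν, y⟫ then upperLim u x else lowerLim u x)|)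
      (𝓝[>] 0) (𝓝 0)}

/-- The reduced boundary `∂*E`, i.e. the jump set of the indicator function. -/
def redBdry (A : Set (En n)) : Set (En n) := jumpSet (A.indicator fun _ => (1:ℝ))

/-- The essential boundary `∂ᵉE`: points of Lebesgue density neither `0` nor `1`. -/
def essBdry (A : Set (En n)) : Set (En n) :=
  {x | ¬ Tendsto (fun r : ℝ => volume (A ∩ ball x r) / volume (ball x r)) (𝓝[>] 0) (𝓝 0) ∧
       ¬ Tendsto (fun r : ℝ => volume (A ∩ ball x r) / volume (ball x r)) (𝓝[>] 0) (𝓝 1)}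

/-- `g` is the approximate gradient of `u` (a.e. approximate differentiability). -/
def IsApproxGradient {n : ℕ} (u : En n → ℝ) (g : En n → En n) : Prop :=
  ∀ᵐ x, Tendsto (fun r : ℝ =>
      (∫ y in ball x r, |u y - u x - ⟪g x, y - x⟫|) / ((volume (ball x r)).toReal * r))
    (𝓝[>] 0) (𝓝 0)

/-- The thermal insulation functional
`F(u) = ∫ |∇u|² + ∫_{J_u} ((u⁺)² + (u⁻)²) dH^{n-1} + Lⁿ({u > 0} \ Ω)`,
with `g` the approximate gradient of `u`. -/
def EnergyF {n : ℕ} (u : En n → ℝ) (g : En n → En n) (Ω : Set (En n)) : ℝ≥0∞ :=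
  (∫⁻ x, ENNReal.ofReal (‖g x‖^2)) +
  (∫⁻ x in jumpSet u, ENNReal.ofReal ((upperLim u x)^2 + (lowerLim u x)^2) ∂μH[(n:ℝ)-1]) +
  volume ({x | 0 < u x} \ Ω)

lemma upperLim_congr {u v : En n → ℝ} {x : En n} {ε : ℝ} (hε : 0 < ε)
    (h : ∀ y ∈ ball x ε, u y = v y) : upperLim u x = upperLim v x := by
  unfold upperLim
  congr 1
  ext t
  apply tendsto_congr'
  filter_upwards [Ioo_mem_nhdsGT hε] with r hr
  congr 1
  apply setIntegral_congr_fun measurableSet_ball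
  intro y hy
  simp only [h y (ball_subset_ball hr.2.le hy)]

lemma lowerLim_congr {u v : En n → ℝ} {x : En n} {ε : ℝ} (hε : 0 < ε)
    (h : ∀ y ∈ ball x ε, u y = v y) : lowerLim u x = lowerLim v x := by
  unfold lowerLim
  congr 1
  ext t
  apply tendsto_congr'
  filter_upwards [Ioo_mem_nhdsGT hε] with r hr
  congr 1
  apply setIntegral_congr_fun measurableSet_ball
  intro y hy
  simp only [h y (ball_subset_ball hr.2.le hy)]

lemma jumpSet_congr {u v : En n → ℝ} {x : En n} {ε : ℝ} (hε : 0 < ε)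
    (h : ∀ y ∈ ball x ε, u y = v y) (hx : x ∈ jumpSet u) : x ∈ jumpSet v := by
  obtain ⟨ν, hν, hlt, hT⟩ := hx
  rw [upperLim_congr hε h, lowerLim_congr hε h] at hlt
  refine ⟨ν, hν, hlt, fun R hR => ?_⟩
  refine (hT R hR).congr' ?_
  filter_upwards [Ioo_mem_nhdsGT (div_pos hε hR)] with r hr
  apply setIntegral_congr_fun measurableSet_ball
  intro y hy
  have : x + r • y ∈ ball x ε := by
    simp only [mem_ball, dist_self_add_left, norm_smul, Real.norm_eq_abs, abs_of_pos hr.1]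
    have hy' : ‖y‖ < R := by simpa using hy
    have h2 := hr.2
    rw [lt_div_iff₀ hR] at h2
    have := mul_le_mul_of_nonneg_left hy'.le hr.1.le
    linarith
  simp only [h _ this, upperLim_congr hε h, lowerLim_congr hε h]

lemma vol_ball_pos (x : En n) {r : ℝ} (hr : 0 < r) : 0 < (volume (ball x r)).toReal :=
  ENNReal.toReal_pos (measure_ball_pos volume x hr).ne' measure_ball_lt_top.ne

lemma intOn_bdd {w : En n → ℝ} (hw : AEStronglyMeasurable w volume) {M : ℝ}
    (hM : ∀ y, |w y| ≤ M) (x : En n) (r : ℝ) : IntegrableOn w (ball x r) :=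
  Measure.integrableOn_of_bounded (M := M) measure_ball_lt_top.ne hw
    (ae_of_all _ fun y => by simpa using hM y)

/-- averages bounded below by a positive constant do not tend to zero -/
lemma not_tendsto_avg {w : En n → ℝ} (hw : AEStronglyMeasurable w volume) {M : ℝ}
    (hM : ∀ y, |w y| ≤ M) {c : ℝ} (hc : 0 < c) (hwc : ∀ y, c ≤ w y) (x : En n) :
    ¬ Tendsto (fun r : ℝ => (∫ y in ball x r, w y) / (volume (ball x r)).toReal)
      (𝓝[>] 0) (𝓝 0) := by
  intro hT
  have : c ≤ 0 := by
    refine ge_of_tendsto hT ?_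
    filter_upwards [self_mem_nhdsWithin] with r hr
    have hp := vol_ball_pos x hr
    rw [le_div_iff₀ hp]
    have := setIntegral_mono (μ := volume) (s := ball x r)
      (f := fun _ => c) (g := w) (integrableOn_const (by exact measure_ball_lt_top.ne))
      (intOn_bdd hw hM x r) hwc
    simp only [setIntegral_const, smul_eq_mul] at this
    rw [mul_comm]; exact this
  linarith

section bounds
variable {u : En n → ℝ} (hum : AEStronglyMeasurable u volume) (hu : ∀ x, u x ∈ Icc (0:ℝ) 1)
include hum hu

lemma upperSet_nonneg (x : En n) (t : ℝ) (ht : Tendsto (fun r : ℝ =>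
      (∫ y in ball x r, max (u y - t) 0) / (volume (ball x r)).toReal)
    (𝓝[>] 0) (𝓝 0)) : 0 ≤ t := by
  by_contra! h
  refine not_tendsto_avg (M := 1 - t) (c := -t) ?_ ?_ (by linarith) ?_ x ht
  · exact (hum.sub aestronglyMeasurable_const).sup aestronglyMeasurable_const
  · intro y
    have := hu y
    rw [abs_of_nonneg (le_max_right _ _)]
    exact max_le (by linarith [this.2]) (by linarith)
  · intro y
    have := (hu y).1
    exact le_max_of_le_left (by linarith)

lemma lowerSet_le (x : En n) (t : ℝ) (ht : Tendsto (fun r : ℝ =>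
      (∫ y in ball x r, max (t - u y) 0) / (volume (ball x r)).toReal)
    (𝓝[>] 0) (𝓝 0)) : t ≤ 1 := by
  by_contra! h
  refine not_tendsto_avg (M := t) (c := t - 1) ?_ ?_ (by linarith) ?_ x ht
  · exact (aestronglyMeasurable_const.sub hum).sup aestronglyMeasurable_const
  · intro y
    have := hu y
    rw [abs_of_nonneg (le_max_right _ _)]
    exact max_le (by linarith [this.1]) (by linarith)
  · intro y
    have := (hu y).2
    exact le_max_of_le_left (by linarith)

lemma upperLim_nonneg (x : En n) : 0 ≤ upperLim u x :=
  Real.sInf_nonneg (fun t ht => upperSet_nonneg hum hu x t ht)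

lemma upperLim_le_of (x : En n) (t : ℝ) (ht : Tendsto (fun r : ℝ =>
      (∫ y in ball x r, max (u y - t) 0) / (volume (ball x r)).toReal)
    (𝓝[>] 0) (𝓝 0)) : upperLim u x ≤ t :=
  csInf_le ⟨0, fun t ht => upperSet_nonneg hum hu x t ht⟩ ht

lemma upperLim_le_one (x : En n) : upperLim u x ≤ 1 := by
  apply upperLim_le_of hum hu
  have : ∀ y, max (u y - 1) 0 = 0 := fun y => max_eq_right (by linarith [(hu y).2])
  simp [this]

lemma lowerLim_nonneg (x : En n) : 0 ≤ lowerLim u x := by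
  have h0 : Tendsto (fun r : ℝ =>
      (∫ y in ball x r, max (0 - u y) 0) / (volume (ball x r)).toReal) (𝓝[>] 0) (𝓝 0) := by
    have : ∀ y, max (0 - u y) 0 = 0 := fun y => max_eq_right (by linarith [(hu y).1])
    simp only [this]
    simp
  exact le_csSup ⟨1, fun t ht => lowerSet_le hum hu x t ht⟩ h0

lemma lowerLim_le_one (x : En n) : lowerLim u x ≤ 1 :=
  Real.sSup_le (fun t ht => lowerSet_le hum hu x t ht) zero_le_one

lemma upperLim_le_zero (x : En n) (h : Tendsto (fun r : ℝ =>
      (∫ y in ball x r, u y) / (volume (ball x r)).toReal) (𝓝[>] 0) (𝓝 0)) :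
    upperLim u x ≤ 0 := by
  apply upperLim_le_of hum hu
  have : ∀ y, max (u y - 0) 0 = u y := fun y => by rw [sub_zero, max_eq_left (hu y).1]
  simpa only [this] using h

lemma upperLim_dichotomy {δ : ℝ} (hud : ∀ᵐ x, u x = 0 ∨ δ ≤ u x) (x : En n)
    (h : upperLim u x < δ) : Tendsto (fun r : ℝ =>
      (∫ y in ball x r, u y) / (volume (ball x r)).toReal) (𝓝[>] 0) (𝓝 0) := by
  have hne : {t : ℝ | Tendsto (fun r : ℝ =>
      (∫ y in ball x r, max (u y - t) 0) / (volume (ball x r)).toReal)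
    (𝓝[>] 0) (𝓝 0)}.Nonempty := by
    refine ⟨1, ?_⟩
    have : ∀ y, max (u y - 1) 0 = 0 := fun y => max_eq_right (by linarith [(hu y).2])
    simp [this]
  obtain ⟨t, ht, htδ⟩ := exists_lt_of_csInf_lt hne h
  have ht0 : 0 ≤ t := upperSet_nonneg hum hu x t ht
  have hs : 0 < δ - t := by linarith
  have ht' := Tendsto.const_mul (1 / (δ - t)) ht
  rw [mul_zero] at ht'
  refine squeeze_zero (fun r => ?_) (fun r => ?_) ht'
  · exact div_nonneg (integral_nonneg fun y => (hu y).1) ENNReal.toReal_nonneg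
  · rw [← mul_div_assoc]
    refine div_le_div_of_nonneg_right ?_ ENNReal.toReal_nonneg
    rw [← integral_const_mul]
    refine setIntegral_mono_ae (intOn_bdd hum (M := 1) (fun y => ?_) x r) ?_ ?_
    · rw [abs_of_nonneg (hu y).1]; exact (hu y).2
    · refine Integrable.const_mul (intOn_bdd (M := 1) ?_ (fun y => ?_) x r) _
      · exact (hum.sub aestronglyMeasurable_const).sup aestronglyMeasurable_const
      · rw [abs_of_nonneg (le_max_right _ _)]
        exact max_le (by linarith [(hu y).2]) zero_le_one
    · filter_upwards [hud] with y hy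
      rcases hy with hy | hy
      · rw [hy]; positivity
      · rw [one_div, inv_mul_eq_div, le_div_iff₀ hs]
        refine le_trans ?_ (le_max_left _ _)
        have := (hu y).2
        nlinarith

end bounds
lemma measurable_ballInt {u : En n → ℝ} (hum : AEStronglyMeasurable u volume) (r : ℝ) :
    Measurable (fun x : En n => ∫ y in ball x r, u y) := by
  have hm := hum.stronglyMeasurable_mk
  have h1 : (fun x : En n => ∫ y in ball x r, u y) =
      fun x => ∫ y, ({p : En n × En n | dist p.2 p.1 < r}.indicator (fun p => hum.mk u p.2)) (x, y) := by
    ext x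
    rw [← integral_indicator measurableSet_ball]
    apply integral_congr_ae
    filter_upwards [hum.ae_eq_mk] with y hy
    simp only [indicator, mem_ball, mem_ofPred_eq, hy]
  rw [h1]
  have hs : StronglyMeasurable ({p : En n × En n | dist p.2 p.1 < r}.indicator
      (fun p => hum.mk u p.2)) := by
    apply StronglyMeasurable.indicator (hm.comp_measurable measurable_snd)
    exact (isOpen_lt (by fun_prop) continuous_const).measurableSet
  exact hs.integral_prod_right'.measurable

/-- dyadic averages do not vanish in the limit -/
def dyadSet (u : En n → ℝ) : Set (En n) :=
  {x | ¬ Tendsto (fun k : ℕ => (∫ y in ball x ((1/2:ℝ)^k), u y) /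
    (volume (ball x ((1/2:ℝ)^k))).toReal) atTop (𝓝 0)}

lemma measurableSet_dyadSet {u : En n → ℝ} (hum : AEStronglyMeasurable u volume) :
    MeasurableSet (dyadSet u) := by
  apply MeasurableSet.compl
  refine measurableSet_tendsto (l := atTop) (𝓝 (0:ℝ)) (f := fun (k : ℕ) (x : En n) =>
    (∫ y in ball x ((1/2:ℝ)^k), u y) / (volume (ball x ((1/2:ℝ)^k))).toReal) ?_
  intro k
  simp only [Measure.addHaar_ball_center]
  exact (measurable_ballInt hum _).div_const _

lemma not_tendsto_of_dyad {u : En n → ℝ} {x : En n} (hx : x ∈ dyadSet u) :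
    ¬ Tendsto (fun r : ℝ =>
      (∫ y in ball x r, u y) / (volume (ball x r)).toReal) (𝓝[>] 0) (𝓝 0) := by
  intro h
  apply hx
  refine h.comp (f := fun k : ℕ => ((1/2:ℝ)^k)) ?_
  rw [tendsto_nhdsWithin_iff]
  refine ⟨tendsto_pow_atTop_nhds_zero_of_lt_one (by norm_num) (by norm_num), ?_⟩
  exact Eventually.of_forall fun k => by simp

lemma tendsto_of_not_dyad {u : En n → ℝ} (hui : Integrable u) (hu0 : ∀ x, 0 ≤ u x)
    {x : En n} (hx : x ∉ dyadSet u) :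
    Tendsto (fun r : ℝ =>
      (∫ y in ball x r, u y) / (volume (ball x r)).toReal) (𝓝[>] 0) (𝓝 0) := by
  have hx : Tendsto (fun k : ℕ => (∫ y in ball x ((1/2:ℝ)^k), u y) /
    (volume (ball x ((1/2:ℝ)^k))).toReal) atTop (𝓝 0) := by
    by_contra h; exact hx h
  have hnn : ∀ r : ℝ, 0 ≤ (∫ y in ball x r, u y) := fun r => integral_nonneg fun y => hu0 y
  rw [Metric.tendsto_atTop] at hx
  rw [Metric.tendsto_nhds]
  intro ε hε
  have h2 : (0:ℝ) < 2 ^ n := by positivity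
  obtain ⟨N, hN⟩ := hx (ε / 2 ^ n) (by positivity)
  filter_upwards [Ioo_mem_nhdsGT (show (0:ℝ) < (1/2)^(N+1) by positivity)] with r hr
  have hr1 : r ≤ 1 := hr.2.le.trans (pow_le_one₀ (by norm_num) (by norm_num))
  obtain ⟨k, hk1, hk2⟩ := exists_nat_pow_near_of_lt_one hr.1 hr1
    (show (0:ℝ) < 1/2 by norm_num) (by norm_num)
  have hkN : N ≤ k := by
    have : ((1:ℝ)/2)^(k+1) < (1/2)^(N+1) := hk1.trans hr.2
    have := (pow_lt_pow_iff_right_of_lt_one₀ (by norm_num : (0:ℝ) < 1/2) (by norm_num)).1 this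
    omega
  have hNk := hN k hkN
  rw [Real.dist_eq, sub_zero, abs_of_nonneg (div_nonneg (hnn _) ENNReal.toReal_nonneg)] at hNk ⊢
  have hp := vol_ball_pos x hr.1
  have hpk := vol_ball_pos x (show (0:ℝ) < (1/2)^k by positivity)
  have hvol : (volume (ball x ((1/2:ℝ)^k))).toReal ≤ 2^n * (volume (ball x r)).toReal := by
    rw [Measure.addHaar_ball_of_pos _ _ (show (0:ℝ) < (1/2)^k by positivity),
      Measure.addHaar_ball_of_pos _ _ hr.1, ENNReal.toReal_mul, ENNReal.toReal_mul,
      ENNReal.toReal_ofReal (by positivity), ENNReal.toReal_ofReal (pow_nonneg hr.1.le _),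
      ← mul_assoc]
    refine mul_le_mul_of_nonneg_right ?_ ENNReal.toReal_nonneg
    rw [finrank_euclideanSpace_fin, ← mul_pow]
    refine pow_le_pow_left₀ (by positivity) ?_ _
    rw [pow_succ] at hk1
    linarith
  have hmono : (∫ y in ball x r, u y) ≤ ∫ y in ball x ((1/2:ℝ)^k), u y := by
    apply setIntegral_mono_set hui.integrableOn (ae_of_all _ fun y => hu0 y)
    exact (ball_subset_ball hk2).eventuallyLE
  rw [div_lt_iff₀ hpk] at hNk
  rw [div_lt_iff₀ hp]
  calc _ ≤ _ := hmono
    _ < _ := hNk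
    _ ≤ ε / 2^n * (2^n * (volume (ball x r)).toReal) := by gcongr
    _ = _ := by field_simp
lemma norm_normalize_sub {m : ℕ} {a b : En m} (ha : 1 ≤ ‖a‖) (hb : 1 ≤ ‖b‖) :
    ‖‖a‖⁻¹ • a - ‖b‖⁻¹ • b‖ ≤ 2 * ‖a - b‖ := by
  have ha0 : 0 < ‖a‖ := by linarith
  have hb0 : 0 < ‖b‖ := by linarith
  have h1 : ‖a‖⁻¹ • a - ‖b‖⁻¹ • b = ‖a‖⁻¹ • (a - b) + (‖a‖⁻¹ - ‖b‖⁻¹) • b := by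
    rw [smul_sub, sub_smul]; abel
  rw [h1]
  refine (norm_add_le _ _).trans ?_
  rw [norm_smul, norm_smul, norm_inv, norm_norm]
  have h2 : ‖‖a‖⁻¹ - ‖b‖⁻¹‖ * ‖b‖ = ‖a‖⁻¹ * |‖b‖ - ‖a‖| := by
    rw [inv_sub_inv ha0.ne' hb0.ne', Real.norm_eq_abs, abs_div, abs_of_pos (mul_pos ha0 hb0)]
    field_simp
  rw [h2]
  have h3 : |‖b‖ - ‖a‖| ≤ ‖a - b‖ := by
    rw [norm_sub_rev]; exact abs_norm_sub_norm_le b a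
  have h4 : ‖a‖⁻¹ ≤ 1 := inv_le_one_of_one_le₀ ha
  have h5 : 0 ≤ ‖a‖⁻¹ := by positivity
  nlinarith [norm_nonneg (a - b), abs_nonneg (‖b‖ - ‖a‖)]

/-- parametrization of a face of the cube -/
def face (m : ℕ) (i : Fin (m+1)) (s : ℝ) (z : Fin m → ℝ) : En (m+1) :=
  WithLp.toLp 2 (i.insertNth s z)

lemma one_le_norm_face (m : ℕ) (i : Fin (m+1)) {s : ℝ} (hs : |s| = 1) (z : Fin m → ℝ) :
    1 ≤ ‖face m i s z‖ := by
  have := PiLp.norm_apply_le (face m i s z) i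
  simpa [face, hs] using this

lemma norm_face_sub (m : ℕ) (i : Fin (m+1)) (s : ℝ) (z w : Fin m → ℝ) :
    ‖face m i s z - face m i s w‖ ≤ (m+1) * ‖z - w‖ := by
  have h0 : ‖face m i s z - face m i s w‖ ≤ ∑ j, ‖(face m i s z - face m i s w) j‖ := by
    rw [EuclideanSpace.norm_eq]
    refine Real.sqrt_le_iff.2 ⟨by positivity, ?_⟩
    exact Finset.sum_sq_le_sq_sum_of_nonneg (fun j _ => norm_nonneg _)
  refine h0.trans ?_
  have : ∀ j ∈ Finset.univ, ‖(face m i s z - face m i s w) j‖ ≤ ‖z - w‖ := by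
    intro j _
    rcases Fin.eq_self_or_eq_succAbove i j with h | ⟨k, h⟩
    · subst h; simp [face]
    · subst h
      simpa [face] using norm_le_pi_norm (z - w) k
  simpa using Finset.sum_le_card_nsmul _ _ _ this

lemma sphere_subset (m : ℕ) : sphere (0 : En (m+1)) 1 ⊆
    ⋃ i : Fin (m+1), ⋃ b : Bool,
      (fun z => ‖face m i (if b then 1 else -1) z‖⁻¹ • face m i (if b then 1 else -1) z) ''
        (Icc (fun _ => (-1:ℝ)) (fun _ => 1)) := by
  intro y hy
  have hy1 : ‖y‖ = 1 := by simpa using hy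
  obtain ⟨i, -, hi⟩ := Finset.exists_max_image Finset.univ (fun i => |y i|) Finset.univ_nonempty
  have hpos : 0 < |y i| := by
    by_contra! h
    have : y = 0 := by
      ext j
      have := hi j (Finset.mem_univ _)
      exact abs_eq_zero.1 (le_antisymm (this.trans h) (abs_nonneg _))
    rw [this] at hy1; simp at hy1
  set b : Bool := decide (0 < y i) with hb
  have hs : (if b then (1:ℝ) else -1) = |y i|⁻¹ * y i := by
    have hne : y i ≠ 0 := abs_pos.1 hpos
    rcases lt_or_gt_of_ne hne with h | h
    · have : b = false := by simp [hb, h.le]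
      rw [this, abs_of_neg h]; simp only [Bool.false_eq_true, if_false]; field_simp
    · have : b = true := by simp [hb, h]
      rw [this, abs_of_pos h]; simp only [if_true]; field_simp
  have hf : face m i (if b then (1:ℝ) else -1) (fun j => |y i|⁻¹ * y (i.succAbove j)) =
      |y i|⁻¹ • y := by
    ext j
    rw [hs]
    rcases Fin.eq_self_or_eq_succAbove i j with h | ⟨k, h⟩
    · subst h; simp [face]
    · subst h; simp [face]
  simp only [mem_iUnion]
  refine ⟨i, b, (fun j => |y i|⁻¹ * y (i.succAbove j)), ?_, ?_⟩
  · have : ∀ j, |(|y i|⁻¹ * y (i.succAbove j))| ≤ 1 := by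
      intro j
      rw [abs_mul, abs_inv, abs_abs, inv_mul_le_iff₀ hpos, mul_one]
      exact hi _ (Finset.mem_univ _)
    exact ⟨fun j => (abs_le.1 (this j)).1, fun j => (abs_le.1 (this j)).2⟩
  · simp only []
    rw [hf, norm_smul, hy1, smul_smul]
    simp [hpos.ne']

lemma sphere_finite (m : ℕ) : μH[(m:ℝ)] (sphere (0 : En (m+1)) 1) < ⊤ := by
  refine (measure_mono (sphere_subset m)).trans_lt ?_
  refine (measure_iUnion_fintype_le _ _).trans_lt (ENNReal.sum_lt_top.2 fun i _ => ?_)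
  refine (measure_iUnion_fintype_le _ _).trans_lt (ENNReal.sum_lt_top.2 fun b _ => ?_)
  set s : ℝ := if b then 1 else -1 with hs
  have hs1 : |s| = 1 := by cases b <;> simp [hs]
  have hL : LipschitzWith (2 * (m+1)) (fun z => ‖face m i s z‖⁻¹ • face m i s z) := by
    refine LipschitzWith.of_dist_le_mul fun z w => ?_
    rw [dist_eq_norm, dist_eq_norm]
    refine (norm_normalize_sub (one_le_norm_face m i hs1 z) (one_le_norm_face m i hs1 w)).trans ?_
    have := norm_face_sub m i s z w
    push_cast
    linarith
  refine ((hL.lipschitzOnWith (s := Icc (fun _ => (-1:ℝ)) (fun _ => 1))).hausdorffMeasure_image_le (Nat.cast_nonneg m)).trans_lt ?_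
  have hv : (μH[(m:ℝ)] : Measure (Fin m → ℝ)) = volume := by
    have := hausdorffMeasure_pi_real (ι := Fin m)
    simpa using this
  rw [hv]
  refine ENNReal.mul_lt_top ?_ isCompact_Icc.measure_lt_top
  exact ENNReal.rpow_lt_top_of_nonneg (Nat.cast_nonneg m) ENNReal.coe_ne_top

lemma sphere_bound (m : ℕ) (x : En (m+1)) {r : ℝ} (hr : 0 < r) :
    μH[(m:ℝ)] (sphere x r) ≤
      ENNReal.ofReal (r^m * (μH[(m:ℝ)] (sphere (0 : En (m+1)) 1)).toReal) := by
  have hsub : sphere x r ⊆ (fun y => x + r • y) '' sphere (0 : En (m+1)) 1 := by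
    intro y hy
    refine ⟨r⁻¹ • (y - x), ?_, ?_⟩
    · rw [mem_sphere_zero_iff_norm, norm_smul, norm_inv, Real.norm_eq_abs, abs_of_pos hr,
        mem_sphere_iff_norm.1 hy, inv_mul_cancel₀ hr.ne']
    · simp [smul_smul, hr.ne']
  have hL : LipschitzWith (Real.toNNReal r) (fun y : En (m+1) => x + r • y) := by
    refine LipschitzWith.of_dist_le_mul fun z w => ?_
    rw [dist_add_left, dist_smul₀, Real.norm_eq_abs, abs_of_pos hr, Real.coe_toNNReal r hr.le]
  refine (measure_mono hsub).trans ?_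
  refine ((hL.lipschitzOnWith (s := sphere 0 1)).hausdorffMeasure_image_le (Nat.cast_nonneg m)).trans ?_
  rw [ENNReal.ofReal_mul (by positivity), ENNReal.ofReal_toReal (sphere_finite m).ne,
    ENNReal.rpow_natCast, ENNReal.ofReal_pow hr.le]
  rfl
/-- Lipschitz approximation of the indicator of the complement of a ball. -/
def hApx (x : En n) (r ε : ℝ) (y : En n) : ℝ := min 1 (max 0 (ε⁻¹ * (‖y - x‖ - r)))

lemma hApx_lip (x : En n) (r : ℝ) {ε : ℝ} (hε : 0 < ε) :
    LipschitzWith (Real.toNNReal ε⁻¹) (hApx x r ε) := by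
  have h1 : LipschitzWith (Real.toNNReal ε⁻¹) (fun y : En n => ε⁻¹ * (‖y - x‖ - r)) := by
    refine LipschitzWith.of_dist_le_mul fun z w => ?_
    rw [Real.dist_eq, ← mul_sub, abs_mul, abs_of_pos (inv_pos.2 hε),
      Real.coe_toNNReal _ (inv_pos.2 hε).le]
    refine mul_le_mul_of_nonneg_left ?_ (inv_pos.2 hε).le
    have := abs_norm_sub_norm_le (z - x) (w - x)
    rw [dist_eq_norm]
    simpa using this
  exact (h1.const_max 0).const_min 1

lemma hApx_lineDeriv_zero (x : En n) (r : ℝ) {ε : ℝ} (hε : 0 < ε) (v y : En n)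
    (hy : y ∉ closedBall x (r + ε) \ ball x r) : lineDeriv ℝ (hApx x r ε) y v = 0 := by
  by_cases h : y ∈ ball x r
  · have : hApx x r ε =ᶠ[𝓝 y] fun _ => 0 := by
      filter_upwards [isOpen_ball.mem_nhds h] with z hz
      have hz' : ‖z - x‖ < r := by simpa [dist_eq_norm] using hz
      have : ε⁻¹ * (‖z - x‖ - r) ≤ 0 :=
        mul_nonpos_of_nonneg_of_nonpos (inv_pos.2 hε).le (by linarith)
      simp [hApx, this]
    rw [this.lineDeriv_eq]; simp [lineDeriv]
  · have h' : y ∈ (closedBall x (r + ε))ᶜ := fun h2 => hy ⟨h2, h⟩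
    have : hApx x r ε =ᶠ[𝓝 y] fun _ => 1 := by
      filter_upwards [isClosed_closedBall.isOpen_compl.mem_nhds h'] with z hz
      have hz' : r + ε < ‖z - x‖ := by simpa [dist_eq_norm] using hz
      have : 1 ≤ ε⁻¹ * (‖z - x‖ - r) := by
        rw [inv_mul_eq_div, le_div_iff₀ hε]; linarith
      simp [hApx, this]
    rw [this.lineDeriv_eq]; simp [lineDeriv]

lemma annulus_vol (x : En n) {r ε : ℝ} (hr : 0 < r) (hε : 0 < ε) (hε1 : ε ≤ 1) :
    volume.real (closedBall x (r + ε) \ ball x r) ≤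
      ε * (n * (r + 1)^(n-1) * volume.real (ball (0 : En n) 1)) := by
  have hsub : ball x r ⊆ closedBall x (r+ε) :=
    ball_subset_closedBall.trans (closedBall_subset_closedBall (by linarith))
  rw [measureReal_sdiff hsub measurableSet_ball measure_closedBall_lt_top.ne]
  have h1 : volume.real (closedBall x (r+ε)) = (r+ε)^n * volume.real (ball (0 : En n) 1) := by
    rw [Measure.addHaar_real_closedBall _ _ (by linarith), finrank_euclideanSpace_fin]
  have h2 : volume.real (ball x r) = r^n * volume.real (ball (0 : En n) 1) := by
    rw [measureReal_def, Measure.addHaar_ball_of_pos _ _ hr, finrank_euclideanSpace_fin,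
      ENNReal.toReal_mul, ENNReal.toReal_ofReal (by positivity), measureReal_def]
  rw [h1, h2, ← sub_mul, ← mul_assoc]
  refine mul_le_mul_of_nonneg_right ?_ measureReal_nonneg
  have h3 := abs_pow_sub_pow_le (r+ε) r n
  have h4 : |r + ε - r| = ε := by rw [add_sub_cancel_left, abs_of_pos hε]
  rw [h4, abs_of_pos hr, abs_of_pos (by linarith : 0 < r + ε),
    max_eq_left (by linarith)] at h3
  refine (le_abs_self _).trans (h3.trans ?_)
  rw [mul_assoc]
  gcongr

lemma comp_smooth {φ : En n → En n} (hφ : ContDiff ℝ (⊤ : ℕ∞) φ) (i : Fin n) :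
    ContDiff ℝ (⊤ : ℕ∞) (fun y => φ y i) := by fun_prop

lemma comp_lineDeriv {φ : En n → En n} (hφ : ContDiff ℝ (⊤ : ℕ∞) φ) (i : Fin n) (y v : En n) :
    lineDeriv ℝ (fun y => φ y i) y v = fderiv ℝ φ y v i := by
  have hd : DifferentiableAt ℝ φ y := hφ.differentiable (by simp) y
  have h1 : HasFDerivAt (fun y => φ y i) ((EuclideanSpace.proj i : En n →L[ℝ] ℝ).comp (fderiv ℝ φ y)) y :=
    (EuclideanSpace.proj i : En n →L[ℝ] ℝ).hasFDerivAt.comp y hd.hasFDerivAt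
  rw [h1.differentiableAt.lineDeriv_eq_fderiv, h1.fderiv]
  rfl

lemma divg_cont {φ : En n → En n} (hφ : ContDiff ℝ (⊤ : ℕ∞) φ) (i : Fin n) :
    Continuous (fun y => fderiv ℝ φ y (EuclideanSpace.single i 1) i) := by
  have h1 : Continuous (fderiv ℝ φ) := hφ.continuous_fderiv (by simp)
  have h2 : Continuous (fun y => fderiv ℝ φ y (EuclideanSpace.single i 1)) :=
    h1.clm_apply continuous_const
  fun_prop

lemma divg_supp {φ : En n → En n} (hc : HasCompactSupport φ) (i : Fin n) :
    HasCompactSupport (fun y => fderiv ℝ φ y (EuclideanSpace.single i 1) i) := by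
  refine (hc.fderiv (𝕜 := ℝ)).comp_left (g := fun L : En n →L[ℝ] En n => L (EuclideanSpace.single i 1) i) ?_
  simp

lemma hApx_bound (x : En n) {r ε : ℝ} (hr : 0 < r) (hε : 0 < ε) (hε1 : ε ≤ 1)
    {φ : En n → En n} (hφ : ContDiff ℝ (⊤ : ℕ∞) φ) (hc : HasCompactSupport φ)
    (hb : ∀ x, ‖φ x‖ ≤ 1) :
    (∫ y, hApx x r ε y * divg φ y) ≤
      n * (n * (r + 1)^(n-1) * volume.real (ball (0 : En n) 1)) := by
  have hL := hApx_lip x r hε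
  have hint : ∀ i ∈ (Finset.univ : Finset (Fin n)), Integrable (fun y =>
      hApx x r ε y * fderiv ℝ φ y (EuclideanSpace.single i 1) i) := fun i _ =>
    (hL.continuous.mul (divg_cont hφ i)).integrable_of_hasCompactSupport (divg_supp hc i).mul_left
  simp only [divg, Finset.mul_sum]
  rw [integral_finsetSum _ hint]
  have hmain : ∀ i ∈ (Finset.univ : Finset (Fin n)),
      (∫ y, hApx x r ε y * fderiv ℝ φ y (EuclideanSpace.single i 1) i) ≤
        n * (r + 1)^(n-1) * volume.real (ball (0 : En n) 1) := by
    intro i _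
    have hci : HasCompactSupport (fun y => φ y i) :=
      hc.comp_left (g := fun w : En n => w i) (by simp)
    obtain ⟨D, hD⟩ := (comp_smooth hφ i).lipschitzWith_of_hasCompactSupport hci (by simp)
    have hibp := hL.integral_lineDeriv_mul_eq (μ := volume) hD hci (-(EuclideanSpace.single i 1))
    simp only [neg_neg, comp_lineDeriv hφ i] at hibp
    have e1 : (∫ y, hApx x r ε y * fderiv ℝ φ y (EuclideanSpace.single i 1) i) =
        ∫ y in closedBall x (r + ε) \ ball x r,
          lineDeriv ℝ (hApx x r ε) y (-(EuclideanSpace.single i 1)) * φ y i := by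
      rw [setIntegral_eq_integral_of_forall_compl_eq_zero, hibp]
      · simp only [mul_comm]
      · intro y hy
        rw [hApx_lineDeriv_zero x r hε _ y hy, zero_mul]
    rw [e1]
    have hfin : volume (closedBall x (r + ε) \ ball x r) < ⊤ :=
      (measure_mono sdiff_subset).trans_lt measure_closedBall_lt_top
    refine (le_abs_self _).trans ?_
    rw [← Real.norm_eq_abs]
    refine (norm_setIntegral_le_of_norm_le_const (C := ε⁻¹) hfin ?_).trans ?_
    · intro y _
      rw [norm_mul]
      have h1 := norm_lineDeriv_le_of_lipschitz ℝ hL (x₀ := y) (v := -(EuclideanSpace.single i (1:ℝ)))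
      rw [norm_neg, EuclideanSpace.norm_single, norm_one, mul_one,
        Real.coe_toNNReal _ (inv_pos.2 hε).le] at h1
      have h2 : ‖φ y i‖ ≤ 1 := (PiLp.norm_apply_le (φ y) i).trans (hb y)
      calc _ ≤ ε⁻¹ * 1 := mul_le_mul h1 h2 (norm_nonneg _) (inv_pos.2 hε).le
        _ = _ := mul_one _
    · rw [inv_mul_le_iff₀ hε]
      exact annulus_vol x hr hε hε1
  simpa using Finset.sum_le_card_nsmul _ _ _ hmain

lemma perimeter_compl_ball (x : En n) {r : ℝ} (hr : 0 < r) :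
    varMeas ((ball x r)ᶜ.indicator fun _ => (1:ℝ)) Set.univ < ⊤ := by
  refine lt_of_le_of_lt ?_ (ENNReal.ofReal_lt_top
    (r := n * (n * (r + 1)^(n-1) * volume.real (ball (0 : En n) 1))))
  refine iSup_le ?_
  rintro ⟨φ, hφ, hc, -, hb⟩
  refine ENNReal.ofReal_le_ofReal ?_
  have hdc : Continuous (divg φ) := by
    unfold divg
    exact continuous_finsetSum _ fun i _ => divg_cont hφ i
  have hdi : Integrable (divg φ) := by
    unfold divg
    exact integrable_finsetSum _ fun i _ =>
      (divg_cont hφ i).integrable_of_hasCompactSupport (divg_supp hc i)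
  have hε : ∀ k : ℕ, (0:ℝ) < 1 / ((k:ℝ)+1) := fun k => by positivity
  have hlim : Tendsto (fun k : ℕ => ∫ y, hApx x r (1/((k:ℝ)+1)) y * divg φ y) atTop
      (𝓝 (∫ y, (ball x r)ᶜ.indicator (fun _ => (1:ℝ)) y * divg φ y)) := by
    refine tendsto_integral_of_dominated_convergence (fun y => ‖divg φ y‖) ?_ hdi.norm ?_ ?_
    · intro k
      exact ((hApx_lip x r (hε k)).continuous.mul hdc).aestronglyMeasurable
    · intro k
      refine ae_of_all _ fun y => ?_
      rw [norm_mul]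
      refine mul_le_of_le_one_left (norm_nonneg _) ?_
      rw [Real.norm_eq_abs, abs_le]
      constructor
      · have : 0 ≤ hApx x r (1/((k:ℝ)+1)) y := le_min zero_le_one (le_max_left _ _)
        linarith
      · exact min_le_left _ _
    · have hS : ∀ᵐ y, y ∉ sphere x r :=
        measure_eq_zero_iff_ae_notMem.1 (Measure.addHaar_sphere_of_ne_zero volume x hr.ne')
      filter_upwards [hS] with y hy
      refine Tendsto.mul_const _ ?_
      by_cases h : y ∈ ball x r
      · have hy' : ‖y - x‖ < r := by simpa [dist_eq_norm] using h
        have : ∀ k : ℕ, hApx x r (1/((k:ℝ)+1)) y = 0 := by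
          intro k
          have : (1/((k:ℝ)+1))⁻¹ * (‖y - x‖ - r) ≤ 0 :=
            mul_nonpos_of_nonneg_of_nonpos (inv_pos.2 (hε k)).le (by linarith)
          rw [hApx, max_eq_left this]; simp
        have hn : y ∉ (ball x r)ᶜ := fun h' => h' h
        simp only [this, indicator_of_notMem hn]
        exact tendsto_const_nhds
      · have hy' : r < ‖y - x‖ := by
          have h1 : r ≤ ‖y - x‖ := by simpa [dist_eq_norm] using h
          have h2 : ‖y - x‖ ≠ r := by simpa [dist_eq_norm] using hy
          exact lt_of_le_of_ne h1 h2.symm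
        rw [indicator_of_mem h]
        refine tendsto_const_nhds.congr' ?_
        obtain ⟨N, hN⟩ := exists_nat_gt (1 / (‖y - x‖ - r))
        filter_upwards [eventually_ge_atTop N] with k hk
        have hk' : (N:ℝ) ≤ k := by exact_mod_cast hk
        have hp : 0 < ‖y - x‖ - r := by linarith
        rw [div_lt_iff₀ hp] at hN
        have : 1 ≤ (1/((k:ℝ)+1))⁻¹ * (‖y - x‖ - r) := by
          rw [one_div, inv_inv]
          nlinarith
        rw [hApx, min_eq_left (this.trans (le_max_right _ _))]
  refine le_of_tendsto' hlim fun k => ?_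
  refine hApx_bound x hr (hε k) ?_ hφ hc hb
  rw [div_le_one (by positivity)]
  have : (0:ℝ) ≤ k := Nat.cast_nonneg k
  linarith
/-- If `u ∈ SBV(ℝⁿ)`, `0 ≤ u ≤ 1`, takes values in `{0} ∪ [δ,1]` a.e.
and is an inward minimizer of `F` (i.e. `F(u) ≤ F(u·1_A)` for every set of finite
perimeter `A ⊇ Ω`), then `H^{n-1}(J_u ∩ B_r(x)) ≤ C(n) δ⁻² r^{n-1}` for every ball
`B_r(x) ⊆ ℝⁿ \ Ω`. -/
theorem stmt_7 (n : ℕ) :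
    ∃ C : ℝ, 0 < C ∧
    ∀ (u : En n → ℝ) (g : En n → En n) (Ω : Set (En n)) (δ : ℝ),
      Integrable u → (∀ x, u x ∈ Icc (0:ℝ) 1) → varMeas u Set.univ < ⊤ →
      IsApproxGradient u g →
      0 < δ → (∀ᵐ x, u x = 0 ∨ δ ≤ u x) →
      EnergyF u g Ω ≠ ⊤ →
      (∀ (A : Set (En n)) (gA : En n → En n), MeasurableSet A → Ω ⊆ A →
        varMeas (A.indicator fun _ => (1:ℝ)) Set.univ < ⊤ →
        IsApproxGradient (fun x => u x * A.indicator (fun _ => (1:ℝ)) x) gA →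
        EnergyF u g Ω ≤ EnergyF (fun x => u x * A.indicator (fun _ => (1:ℝ)) x) gA Ω) →
      ∀ (x : En n) (r : ℝ), 0 < r → ball x r ⊆ Ωᶜ →
        μH[(n:ℝ)-1] (jumpSet u ∩ ball x r) ≤ ENNReal.ofReal (C / δ^2 * r^(n-1)) := by
  rcases n with _ | m
  · refine ⟨1, one_pos, ?_⟩
    intro u g Ω δ _ _ _ _ _ _ _ _ x r _ _
    have : jumpSet u = ∅ := by
      ext y
      simp only [mem_empty_iff_false, iff_false]
      rintro ⟨ν, hν, -⟩
      rw [Subsingleton.elim ν 0, norm_zero] at hν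
      exact zero_ne_one hν
    rw [this]; simp
  set K := (μH[(m:ℝ)] (sphere (0 : En (m+1)) 1)).toReal with hK
  have hK0 : 0 ≤ K := ENNReal.toReal_nonneg
  refine ⟨2 * K + 1, by linarith, ?_⟩
  intro u g Ω δ hui hu _ hg hδ hud hfin hmin x r hr hball
  have hcast : (((m+1 : ℕ):ℝ) - 1) = m := by push_cast; ring
  unfold EnergyF at hfin hmin
  simp only [hcast] at hfin hmin ⊢
  set A : Set (En (m+1)) := (ball x r)ᶜ with hA
  have hAm : MeasurableSet A := measurableSet_ball.compl
  set v : En (m+1) → ℝ := fun x => u x * A.indicator (fun _ => (1:ℝ)) x with hv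
  have hvA : ∀ y, y ∉ ball x r → v y = u y := fun y hy => by simp [hv, hA, hy]
  have hvB : ∀ y ∈ ball x r, v y = 0 := fun y hy => by
    have : y ∉ A := fun h => h hy
    simp [hv, this]
  have hvu : ∀ y, 0 ≤ v y ∧ v y ≤ u y := by
    intro y
    by_cases h : y ∈ ball x r
    · rw [hvB y h]; exact ⟨le_rfl, (hu y).1⟩
    · rw [hvA y h]; exact ⟨(hu y).1, le_rfl⟩
  have hv1 : ∀ y, v y ∈ Icc (0:ℝ) 1 := fun y => ⟨(hvu y).1, (hvu y).2.trans (hu y).2⟩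
  have hum := hui.aestronglyMeasurable
  have hvm : AEStronglyMeasurable v volume :=
    hum.mul ((measurable_const.indicator hAm).aestronglyMeasurable)
  -- points outside the closed ball
  have hout : ∀ y ∈ (closedBall x r)ᶜ, ∃ ε > 0, ∀ z ∈ ball y ε, u z = v z := by
    intro y hy
    obtain ⟨ε, hε, hsub⟩ := Metric.isOpen_iff.1 isClosed_closedBall.isOpen_compl y hy
    exact ⟨ε, hε, fun z hz => (hvA z fun h => hsub hz (ball_subset_closedBall h)).symm⟩
  have hin : ∀ y ∈ ball x r, ∃ ε > 0, ∀ z ∈ ball y ε, v z = 0 := by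
    intro y hy
    obtain ⟨ε, hε, hsub⟩ := Metric.isOpen_iff.1 isOpen_ball y hy
    exact ⟨ε, hε, fun z hz => hvB z (hsub hz)⟩
  have hgA : IsApproxGradient v (A.indicator g) := by
    have hS : ∀ᵐ y, y ∉ sphere x r :=
      measure_eq_zero_iff_ae_notMem.1 (Measure.addHaar_sphere_of_ne_zero volume x hr.ne')
    unfold IsApproxGradient at hg ⊢
    filter_upwards [hg, hS] with y hy hyS
    by_cases h : y ∈ ball x r
    · obtain ⟨ε, hε, hz⟩ := hin y h
      have hyA : y ∉ A := fun h' => h' h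
      refine (tendsto_const_nhds (x := (0:ℝ))).congr' ?_
      filter_upwards [Ioo_mem_nhdsGT hε] with ρ hρ
      rw [setIntegral_congr_fun (g := fun _ => (0:ℝ)) measurableSet_ball]
      · simp
      · intro z hz'
        simp [hz z (ball_subset_ball hρ.2.le hz'), hvB y h, hyA]
    · have hyc : y ∈ (closedBall x r)ᶜ := by
        intro hc
        rw [mem_closedBall] at hc
        rw [mem_ball] at h
        exact hyS (mem_sphere.2 (le_antisymm hc (not_lt.1 h)))
      obtain ⟨ε, hε, hz⟩ := hout y hyc
      refine hy.congr' ?_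
      filter_upwards [Ioo_mem_nhdsGT hε] with ρ hρ
      congr 1
      apply setIntegral_congr_fun measurableSet_ball
      intro z hz'
      have hyA : y ∈ A := h
      simp only [hz z (ball_subset_ball hρ.2.le hz'), hvA y h, indicator_of_mem hyA]
  have hΩA : Ω ⊆ A := fun y hy hyb => hball hyb hy
  have hE := hmin A (A.indicator g) hAm hΩA (perimeter_compl_ball x hr) hgA
  have hG : (∫⁻ y, ENNReal.ofReal (‖A.indicator g y‖^2)) ≤ ∫⁻ y, ENNReal.ofReal (‖g y‖^2) := by
    refine lintegral_mono fun y => ENNReal.ofReal_le_ofReal ?_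
    exact pow_le_pow_left₀ (norm_nonneg _) (norm_indicator_le_norm_self g y) 2
  have hV : volume ({y | 0 < v y} \ Ω) ≤ volume ({y | 0 < u y} \ Ω) :=
    measure_mono fun y hy => ⟨lt_of_lt_of_le hy.1 (hvu y).2, hy.2⟩
  set fu : En (m+1) → ℝ≥0∞ := fun y => ENNReal.ofReal ((upperLim u y)^2 + (lowerLim u y)^2) with hfu
  set fv : En (m+1) → ℝ≥0∞ := fun y => ENNReal.ofReal ((upperLim v y)^2 + (lowerLim v y)^2) with hfv
  have hfin1 := (ENNReal.add_ne_top.1 hfin).1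
  have hGfin := (ENNReal.add_ne_top.1 hfin1).1
  have hJfin := (ENNReal.add_ne_top.1 hfin1).2
  have hVfin := (ENNReal.add_ne_top.1 hfin).2
  have hJ : (∫⁻ y in jumpSet u, fu y ∂μH[(m:ℝ)]) ≤ ∫⁻ y in jumpSet v, fv y ∂μH[(m:ℝ)] := by
    have h1 := hE.trans (add_le_add (add_le_add_left hG _) hV)
    have h2 := (ENNReal.add_le_add_iff_right hVfin).1 h1
    exact (ENNReal.add_le_add_iff_left hGfin).1 h2
  -- split
  have hcb : MeasurableSet (closedBall x r) := isClosed_closedBall.measurableSet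
  have su := lintegral_inter_add_sdiff (μ := (μH[(m:ℝ)] : Measure (En (m+1)))) fu (jumpSet u) hcb
  have sv := lintegral_inter_add_sdiff (μ := (μH[(m:ℝ)] : Measure (En (m+1)))) fv (jumpSet v) hcb
  have hdiff : jumpSet v \ closedBall x r = jumpSet u \ closedBall x r := by
    ext y
    constructor
    · rintro ⟨h1, h2⟩
      obtain ⟨ε, hε, hz⟩ := hout y h2
      exact ⟨jumpSet_congr hε (fun z hz' => (hz z hz').symm) h1, h2⟩
    · rintro ⟨h1, h2⟩
      obtain ⟨ε, hε, hz⟩ := hout y h2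
      exact ⟨jumpSet_congr hε hz h1, h2⟩
  have hfeq : (∫⁻ y in jumpSet v \ closedBall x r, fv y ∂μH[(m:ℝ)]) =
      ∫⁻ y in jumpSet u \ closedBall x r, fu y ∂μH[(m:ℝ)] := by
    rw [hdiff]
    apply lintegral_congr_ae
    have : ∀ᵐ y ∂((μH[(m:ℝ)] : Measure (En (m+1))).restrict (closedBall x r)ᶜ), fv y = fu y := by
      filter_upwards [ae_restrict_mem hcb.compl] with y hy
      obtain ⟨ε, hε, hz⟩ := hout y hy
      simp only [hfu, hfv, upperLim_congr hε hz, lowerLim_congr hε hz]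
    exact ae_mono (Measure.restrict_mono (fun y hy => hy.2) le_rfl) this
  have hJsph : jumpSet v ∩ closedBall x r ⊆ sphere x r := by
    rintro y ⟨h1, h2⟩
    by_contra h3
    have hyb : y ∈ ball x r := lt_of_le_of_ne h2 h3
    obtain ⟨ε, hε, hz⟩ := hin y hyb
    obtain ⟨ν, hν, hlt, -⟩ := h1
    have hup : upperLim v y ≤ 0 := by
      apply upperLim_le_zero hvm hv1
      refine (tendsto_const_nhds (x := (0:ℝ))).congr' ?_
      filter_upwards [Ioo_mem_nhdsGT hε] with ρ hρ
      rw [setIntegral_congr_fun (g := fun _ => (0:ℝ)) measurableSet_ball]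
      · simp
      · intro z hz'
        exact hz z (ball_subset_ball hρ.2.le hz')
    have := lowerLim_nonneg hvm hv1 y
    linarith
  have hvbound : (∫⁻ y in jumpSet v ∩ closedBall x r, fv y ∂μH[(m:ℝ)]) ≤
      2 * μH[(m:ℝ)] (sphere x r) := by
    calc _ ≤ ∫⁻ y in jumpSet v ∩ closedBall x r, 2 ∂μH[(m:ℝ)] := by
          refine lintegral_mono fun y => ?_
          have a1 := upperLim_nonneg hvm hv1 y
          have a2 := upperLim_le_one hvm hv1 y
          have a3 := lowerLim_nonneg hvm hv1 y
          have a4 := lowerLim_le_one hvm hv1 y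
          rw [hfv, show (2:ℝ≥0∞) = ENNReal.ofReal 2 by simp]
          exact ENNReal.ofReal_le_ofReal (by nlinarith)
      _ = 2 * μH[(m:ℝ)] (jumpSet v ∩ closedBall x r) := setLIntegral_const _ _
      _ ≤ _ := by gcongr
  have hdfin : (∫⁻ y in jumpSet u \ closedBall x r, fu y ∂μH[(m:ℝ)]) ≠ ⊤ := by
    refine ne_top_of_le_ne_top hJfin ?_
    rw [← su]; exact le_add_self
  have hub : (∫⁻ y in jumpSet u ∩ closedBall x r, fu y ∂μH[(m:ℝ)]) ≤
      2 * μH[(m:ℝ)] (sphere x r) := by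
    rw [← su, ← sv, hfeq] at hJ
    exact ((ENNReal.add_le_add_iff_right hdfin).1 hJ).trans hvbound
  -- lower bound
  have hD := measurableSet_dyadSet hum
  have hJD : jumpSet u ⊆ dyadSet u := by
    intro y hy
    by_contra hn
    have h1 := tendsto_of_not_dyad hui (fun y => (hu y).1) hn
    have h2 := upperLim_le_zero hum hu y h1
    obtain ⟨ν, -, hlt, -⟩ := hy
    have := lowerLim_nonneg hum hu y
    linarith
  have hlow : ENNReal.ofReal (δ^2) * μH[(m:ℝ)] (jumpSet u ∩ ball x r) ≤
      ∫⁻ y in jumpSet u ∩ closedBall x r, fu y ∂μH[(m:ℝ)] := by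
    calc _ ≤ ENNReal.ofReal (δ^2) * μH[(m:ℝ)] (jumpSet u ∩ closedBall x r) := by
          gcongr; exact ball_subset_closedBall
      _ = ∫⁻ y in jumpSet u ∩ closedBall x r, ENNReal.ofReal (δ^2) ∂μH[(m:ℝ)] :=
          (setLIntegral_const _ _).symm
      _ ≤ _ := by
          apply lintegral_mono_ae
          have : ∀ᵐ y ∂((μH[(m:ℝ)] : Measure (En (m+1))).restrict (dyadSet u)),
              ENNReal.ofReal (δ^2) ≤ fu y := by
            filter_upwards [ae_restrict_mem hD] with y hy
            refine ENNReal.ofReal_le_ofReal ?_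
            have : δ ≤ upperLim u y := by
              by_contra! hlt
              exact not_tendsto_of_dyad hy (upperLim_dichotomy hum hu hud y hlt)
            nlinarith [sq_nonneg (lowerLim u y)]
          exact ae_mono (Measure.restrict_mono (fun y hy => hJD hy.1) le_rfl) this
  have hδ2 : 0 < δ^2 := by positivity
  have hfinal := hlow.trans (hub.trans (mul_le_mul_right (sphere_bound m x hr) 2))
  rw [mul_comm, ← ENNReal.le_div_iff_mul_le (Or.inl (by simpa using hδ.ne'))
    (Or.inl ENNReal.ofReal_ne_top)] at hfinal
  refine hfinal.trans ?_
  rw [← hK]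
  rw [show (2:ℝ≥0∞) * ENNReal.ofReal (r^m * K) = ENNReal.ofReal 2 * ENNReal.ofReal (r^m * K) by simp,
    ← ENNReal.ofReal_mul (by norm_num),
    ← ENNReal.ofReal_div_of_pos hδ2]
  refine ENNReal.ofReal_le_ofReal ?_
  rw [Nat.add_sub_cancel, div_mul_eq_mul_div]
  refine div_le_div_of_nonneg_right ?_ hδ2.le
  have : 0 < r^m := by positivity
  nlinarith
end
end

section
/- Let U be a bounded convex open subset of R², and suppose that for some constant c₀ > 0 every orthogonal projection of U onto a line has length at least c₀ times the perimeter of U. Then there exists an ellipse Q with Q ⊆ U ⊆ 2Q (the dilate of Q about its center by factor 2) whose eccentricity is bounded away from 1 by a constant depending only on c₀. -/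
open MeasureTheory Metric Set
open scoped Topology ENNReal RealInnerProductSpace

lemma aux_real (d s n t b X : ℝ) (hd : 2 < d) (hs : 0 < s) (hsd : 1 + 2 * s ≤ d)
    (hb : b ^ 2 * (d - 1) = d - 1 - 2 * s) (hn : 0 ≤ n) (ht : |t| ≤ n)
    (hX : X ^ 2 ≤ b ^ 2 * n ^ 2 + ((1 + s) ^ 2 - b ^ 2) * t ^ 2) :
    s * t + X ≤ max n (d * t) := by
  obtain ⟨h1, h2⟩ := abs_le.1 ht
  have hd1 : 0 < d - 1 := by linarith
  have hb' : b ^ 2 = 1 - 2 * s / (d - 1) := by field_simp; linarith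
  rcases le_total (d * t) n with h | h
  · rw [max_eq_left h]
    have h0 : 0 ≤ n - s * t := by nlinarith
    have key : X ^ 2 ≤ (n - s * t) ^ 2 := by
      have e : (n - s * t) ^ 2 - (b ^ 2 * n ^ 2 + ((1 + s) ^ 2 - b ^ 2) * t ^ 2)
          = s * (2 / (d - 1)) * ((n + t) * (n - d * t)) := by
        rw [hb']; field_simp; ring
      have : 0 ≤ s * (2 / (d - 1)) * ((n + t) * (n - d * t)) := by
        have : 0 ≤ n + t := by linarith
        have : 0 ≤ n - d * t := by linarith
        positivity
      linarith
    have := abs_le_of_sq_le_sq key h0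
    linarith [le_abs_self X, this]
  · rw [max_eq_right h]
    have ht0 : 0 ≤ t := by nlinarith
    have h0 : 0 ≤ d * t - s * t := by nlinarith
    have key : X ^ 2 ≤ (d * t - s * t) ^ 2 := by
      have e : (d * t - s * t) ^ 2 - (b ^ 2 * n ^ 2 + ((1 + s) ^ 2 - b ^ 2) * t ^ 2)
          = b ^ 2 * ((d * t - n) * (d * t + n)) := by
        rw [hb']; field_simp; ring
      have : 0 ≤ b ^ 2 * ((d * t - n) * (d * t + n)) := by
        have : 0 ≤ d * t - n := by linarith
        have : 0 ≤ d * t + n := by nlinarith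
        positivity
      linarith
    have := abs_le_of_sq_le_sq key h0
    linarith [le_abs_self X, this]

lemma aux_choice (d : ℝ) (hd : 2 < d) : ∃ s b : ℝ, 0 < s ∧ 1 + 2 * s ≤ d ∧
    b ^ 2 * (d - 1) = d - 1 - 2 * s ∧ 0 < b ∧ 1 < (1 + s) * b := by
  have hd1 : 0 < d - 1 := by linarith
  obtain ⟨k, hk⟩ : ∃ k, k = 2 / (d - 1) := ⟨_, rfl⟩
  have hk0 : 0 < k := by rw [hk]; positivity
  have hk2 : k < 2 := by rw [hk, div_lt_iff₀ hd1]; linarith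
  have hkd : k * (d - 1) = 2 := by rw [hk]; field_simp
  obtain ⟨s, hs⟩ : ∃ s, s = (2 - k) / 10 := ⟨_, rfl⟩
  have hs0 : 0 < s := by rw [hs]; linarith
  have hs1 : s ≤ 1 / 5 := by rw [hs]; linarith
  have hks : 0 < 1 - k * s := by nlinarith
  have hsq := Real.sq_sqrt hks.le
  have hbp := Real.sqrt_pos.2 hks
  refine ⟨s, √(1 - k * s), hs0, by linarith, ?_, hbp, ?_⟩
  · rw [hsq]; linear_combination (-s) * hkd
  · by_contra! hc
    have : ((1 + s) * √(1 - k * s)) ^ 2 ≤ 1 := by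
      have : 0 ≤ (1 + s) * √(1 - k * s) := by positivity
      nlinarith
    rw [mul_pow, hsq] at this
    have hk' : k = 2 - 10 * s := by linarith
    subst hk'
    nlinarith [mul_pos hs0 hs0, mul_pos (mul_pos hs0 hs0) hs0]

lemma perim_finite (U : Set (EuclideanSpace ℝ (Fin 2))) (ho : IsOpen U) (hc : Convex ℝ U)
    (hb : Bornology.IsBounded U) : μH[(1:ℝ)] (frontier U) < ⊤ := by
  obtain ⟨R, hR, hUR⟩ : ∃ R : ℝ, 0 < R ∧ frontier U ⊆ closedBall 0 R := by
    have : Bornology.IsBounded (frontier U) := hb.closure.subset frontier_subset_closure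
    obtain ⟨R, h⟩ := this.subset_closedBall 0
    exact ⟨max R 1, by positivity, h.trans (closedBall_subset_closedBall (le_max_left _ _))⟩
  have hsph : μH[(1:ℝ)] (sphere (0 : EuclideanSpace ℝ (Fin 2)) R) < ⊤ := by
    have h1 : μH[(1:ℝ)] (sphere (0 : ℂ) R) < ⊤ := by
      have := (lipschitzWith_circleMap 0 R).hausdorffMeasure_image_le (zero_le_one' ℝ)
        (Ioc 0 (2 * Real.pi))
      rw [image_circleMap_Ioc, abs_of_pos hR] at this
      refine this.trans_lt ?_
      rw [hausdorffMeasure_real]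
      simp [ENNReal.mul_lt_top]
    have h2 := Complex.orthonormalBasisOneI.repr.isometry.hausdorffMeasure_image
      (d := 1) (Or.inl zero_le_one) (sphere (0 : ℂ) R)
    rw [LinearIsometryEquiv.image_sphere, map_zero] at h2
    rwa [h2]
  have hex : ∀ x : frontier U, ∃ y : EuclideanSpace ℝ (Fin 2), ‖y‖ = R ∧
      ∀ x' ∈ closure U, ⟪y - x, x' - x⟫ ≤ 0 := by
    rintro ⟨x, hx⟩
    have hxU : x ∉ U := by
      rw [ho.frontier_eq] at hx; exact hx.2
    rcases U.eq_empty_or_nonempty with rfl | ⟨a, ha⟩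
    · simp at hx
    obtain ⟨f, hf⟩ := geometric_hahn_banach_open_point hc ho hxU
    obtain ⟨w, rfl⟩ := (InnerProductSpace.toDual ℝ (EuclideanSpace ℝ (Fin 2))).surjective f
    simp only [InnerProductSpace.toDual_apply_apply] at hf
    have hw : w ≠ 0 := by
      rintro rfl; simpa using hf a ha
    have hw' : 0 < ‖w‖ := norm_pos_iff.2 hw
    have hxR : ‖x‖ ≤ R := by simpa using hUR hx
    have hcl : ∀ x' ∈ closure U, ⟪w, x'⟫ ≤ ⟪w, x⟫ := by
      intro x' hx'
      have : closure U ⊆ {y | ⟪w, y⟫ ≤ ⟪w, x⟫} :=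
        closure_minimal (fun y hy => (hf y hy).le) (isClosed_le (by fun_prop) (by fun_prop))
      exact this hx'
    have hT : 0 ≤ 2 * R / ‖w‖ := by positivity
    have := intermediate_value_Icc (f := fun t : ℝ => ‖x + t • w‖) hT (by fun_prop)
    obtain ⟨t, ht, hty⟩ : R ∈ (fun t : ℝ => ‖x + t • w‖) '' Icc 0 (2 * R / ‖w‖) := by
      apply this
      refine ⟨by simpa using hxR, ?_⟩
      have h3 : ‖(2 * R / ‖w‖) • w‖ = 2 * R := by
        rw [norm_smul, Real.norm_of_nonneg hT]; field_simp
      have := norm_sub_le (x + (2 * R / ‖w‖) • w) x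
      rw [add_sub_cancel_left, h3] at this
      linarith
    refine ⟨x + t • w, hty, fun x' hx' => ?_⟩
    simp only [add_sub_cancel_left, inner_smul_left, inner_sub_right]
    have := hcl x' hx'
    have h0 := ht.1
    simp
    nlinarith
  choose g hg1 hg2 using hex
  have hanti : AntilipschitzWith 1 g := by
    apply AntilipschitzWith.of_le_mul_dist
    rintro ⟨x, hx⟩ ⟨y, hy⟩
    have h1 := hg2 ⟨x, hx⟩ y (frontier_subset_closure hy)
    have h2 := hg2 ⟨y, hy⟩ x (frontier_subset_closure hx)
    generalize g ⟨x, hx⟩ = p at *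
    generalize g ⟨y, hy⟩ = q at *
    simp only [NNReal.coe_one, one_mul, Subtype.dist_eq, dist_eq_norm] at *
    have h3 : ‖x - y‖ ^ 2 ≤ ⟪p - q, x - y⟫ := by
      rw [← real_inner_self_eq_norm_sq]
      simp only [inner_sub_left, inner_sub_right] at *
      linarith
    have h4 := real_inner_le_norm (p - q) (x - y)
    by_contra! hlt
    have := norm_nonneg (p - q)
    nlinarith
  have h5 := hanti.le_hausdorffMeasure_image (zero_le_one' ℝ) univ
  have h6 := (isometry_subtype_coe (s := frontier U)).hausdorffMeasure_image
      (d := 1) (Or.inl zero_le_one) univ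
  rw [image_univ, Subtype.range_coe] at h6
  rw [h6]
  refine h5.trans_lt ?_
  simp only [ENNReal.coe_one, ENNReal.one_rpow, one_mul]
  refine (measure_mono ?_).trans_lt hsph
  rintro _ ⟨x, -, rfl⟩
  simpa using hg1 x

lemma perim_ge (U : Set (EuclideanSpace ℝ (Fin 2))) (ho : IsOpen U) (hc : Convex ℝ U)
    (hb : Bornology.IsBounded U) (w : EuclideanSpace ℝ (Fin 2)) (hw : ‖w‖ = 1)
    (x y : EuclideanSpace ℝ (Fin 2)) (hx : x ∈ U) (hy : y ∈ U) :
    ⟪w, y⟫ - ⟪w, x⟫ ≤ (μH[(1:ℝ)] (frontier U)).toReal := by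
  have hsub : Icc ⟪w, x⟫ ⟪w, y⟫ ⊆ (fun z => (⟪w, z⟫ : ℝ)) '' frontier U := by
    intro r hr
    have hconv : Convex ℝ ((fun z => (⟪w, z⟫ : ℝ)) '' U) :=
      hc.linear_image (innerₛₗ ℝ w)
    obtain ⟨p, hp, hpr⟩ : r ∈ (fun z => (⟪w, z⟫ : ℝ)) '' U :=
      hconv.ordConnected.out ⟨x, hx, rfl⟩ ⟨y, hy, rfl⟩ hr
    obtain ⟨e, he, hwe⟩ : ∃ e : EuclideanSpace ℝ (Fin 2), e ≠ 0 ∧ ⟪w, e⟫ = 0 := by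
      refine ⟨!₂[-w 1, w 0], ?_, ?_⟩
      · intro h
        have h0 := congrArg (fun v : EuclideanSpace ℝ (Fin 2) => v 0) h
        have h1 := congrArg (fun v : EuclideanSpace ℝ (Fin 2) => v 1) h
        simp at h0 h1
        have : w = 0 := by ext i; fin_cases i <;> simp [h0, h1]
        simp [this] at hw
      · simp [PiLp.inner_apply, Fin.sum_univ_two]; ring
    have hcont : Continuous (fun t : ℝ => p + t • e) := by fun_prop
    have hne : (frontier ((fun t : ℝ => p + t • e) ⁻¹' U)).Nonempty := by
      rw [nonempty_frontier_iff]
      refine ⟨⟨0, by simpa using hp⟩, fun hu => ?_⟩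
      obtain ⟨R, hR⟩ := hb.subset_closedBall p
      have he' : 0 < ‖e‖ := norm_pos_iff.2 he
      have h1 : ((|R| + 1) / ‖e‖) ∈ (fun t : ℝ => p + t • e) ⁻¹' U := hu ▸ mem_univ _
      have h2 := hR h1
      have h3 : 0 ≤ (|R| + 1) / ‖e‖ := by positivity
      rw [mem_closedBall, dist_eq_norm, add_sub_cancel_left, norm_smul, Real.norm_of_nonneg h3,
        div_mul_cancel₀ _ he'.ne'] at h2
      linarith [le_abs_self R]
    obtain ⟨t, ht⟩ := hne
    have := hcont.frontier_preimage_subset U ht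
    refine ⟨p + t • e, this, ?_⟩
    simp [inner_add_right, inner_smul_right, hwe] at hpr ⊢
    exact hpr
  have hlip : LipschitzWith 1 (fun z => (⟪w, z⟫ : ℝ)) := by
    apply LipschitzWith.of_dist_le_mul
    intro a b
    rw [Real.dist_eq, ← inner_sub_right, dist_eq_norm]
    have := abs_real_inner_le_norm w (a - b)
    simpa [hw] using this
  have h1 := hlip.hausdorffMeasure_image_le (zero_le_one' ℝ) (frontier U)
  have h2 := (measure_mono hsub).trans h1
  rw [hausdorffMeasure_real, Real.volume_Icc] at h2
  simp only [ENNReal.coe_one, ENNReal.one_rpow, one_mul] at h2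
  exact (ENNReal.ofReal_le_iff_le_toReal (perim_finite U ho hc hb).ne).1 h2

lemma det_D (e : EuclideanSpace ℝ (Fin 2)) (he : ‖e‖ = 1) (a b : ℝ) :
    (b • ContinuousLinearMap.id ℝ (EuclideanSpace ℝ (Fin 2)) +
      (a - b) • (innerSL ℝ e).smulRight e).det = a * b := by
  have h1 : e 0 ^ 2 + e 1 ^ 2 = 1 := by
    have := EuclideanSpace.norm_sq_eq e
    rw [he] at this
    simp [Fin.sum_univ_two] at this
    linarith
  have hi : ∀ i, ⟪e, EuclideanSpace.single i (1:ℝ)⟫ = e i := by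
    intro i; simp [EuclideanSpace.inner_single_right]
  rw [ContinuousLinearMap.det,
    ← LinearMap.det_toMatrix (EuclideanSpace.basisFun (Fin 2) ℝ).toBasis, Matrix.det_fin_two]
  simp [LinearMap.toMatrix_apply, hi]
  linear_combination (b * (a - b)) * h1

lemma ell_sub (K : Set (EuclideanSpace ℝ (Fin 2))) (hK : IsClosed K) (hc : Convex ℝ K)
    (hB : closedBall 0 1 ⊆ K) (p : EuclideanSpace ℝ (Fin 2)) (hp : p ∈ K) (hd : 2 < ‖p‖) :
    ∃ (z : EuclideanSpace ℝ (Fin 2))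
      (D : EuclideanSpace ℝ (Fin 2) →L[ℝ] EuclideanSpace ℝ (Fin 2)), 1 < D.det ∧
      ∀ v, ‖v‖ ≤ 1 → z + D v ∈ K := by
  obtain ⟨s, b, hs, hsd, hb, hb0, hab⟩ := aux_choice ‖p‖ hd
  have hp0 : 0 < ‖p‖ := by linarith
  obtain ⟨e, he⟩ : ∃ e, e = ‖p‖⁻¹ • p := ⟨_, rfl⟩
  have hpe : p = ‖p‖ • e := by rw [he, smul_inv_smul₀ hp0.ne']
  have he1 : ‖e‖ = 1 := by rw [he, norm_smul, norm_inv, norm_norm]; field_simp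
  have hee : ⟪e, e⟫ = 1 := by rw [real_inner_self_eq_norm_sq, he1]; norm_num
  refine ⟨s • e, b • ContinuousLinearMap.id ℝ (EuclideanSpace ℝ (Fin 2)) +
      ((1 + s) - b) • (innerSL ℝ e).smulRight e, ?_, ?_⟩
  · rw [det_D e he1]; exact hab
  · intro v hv
    by_contra hnot
    obtain ⟨f, u, hf, hu⟩ := geometric_hahn_banach_closed_point hc hK hnot
    obtain ⟨w, rfl⟩ := (InnerProductSpace.toDual ℝ (EuclideanSpace ℝ (Fin 2))).surjective f
    simp only [InnerProductSpace.toDual_apply_apply] at hf hu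
    have hn : ‖w‖ < u := by
      by_cases hw : w = 0
      · subst hw
        simpa using hf 0 (hB (by simp))
      have hw' : 0 < ‖w‖ := norm_pos_iff.2 hw
      have := hf (‖w‖⁻¹ • w) (hB (by simp [norm_smul, hw'.ne']))
      rw [inner_smul_right, real_inner_self_eq_norm_sq] at this
      field_simp at this
      exact this
    have hpu := hf p hp
    rw [hpe, inner_smul_right] at hpu
    obtain ⟨W, hW⟩ : ∃ W, W = b • w + (((1 + s) - b) * ⟪w, e⟫) • e := ⟨_, rfl⟩
    have hWn : ‖W‖ ^ 2 = b ^ 2 * ‖w‖ ^ 2 + ((1 + s) ^ 2 - b ^ 2) * ⟪w, e⟫ ^ 2 := by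
      rw [← real_inner_self_eq_norm_sq, ← real_inner_self_eq_norm_sq, hW]
      simp only [inner_add_left, inner_add_right, real_inner_smul_left, real_inner_smul_right, hee,
        real_inner_comm w e]
      ring
    have h1 := aux_real ‖p‖ s ‖w‖ ⟪w, e⟫ b ‖W‖ hd hs hsd hb (norm_nonneg _)
      (by simpa [he1] using abs_real_inner_le_norm w e) hWn.le
    have h2 : ⟪W, v⟫ ≤ ‖W‖ := by
      have := real_inner_le_norm W v
      have := norm_nonneg W
      nlinarith
    have h3 : ⟪w, s • e + (b • ContinuousLinearMap.id ℝ (EuclideanSpace ℝ (Fin 2)) +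
      ((1 + s) - b) • (innerSL ℝ e).smulRight e) v⟫ = s * ⟪w, e⟫ + ⟪W, v⟫ := by
      rw [hW]
      simp [inner_add_left, inner_add_right, real_inner_smul_left, real_inner_smul_right]
      ring
    rw [h3] at hu
    have := max_lt hn hpu
    linarith

lemma john (K : Set (EuclideanSpace ℝ (Fin 2))) (hK : IsCompact K) (hc : Convex ℝ K)
    (hi : (interior K).Nonempty) :
    ∃ (z : EuclideanSpace ℝ (Fin 2))
      (L : EuclideanSpace ℝ (Fin 2) ≃L[ℝ] EuclideanSpace ℝ (Fin 2)),
      (∀ v, ‖v‖ ≤ 1 → z + L v ∈ K) ∧ ∀ x ∈ K, ‖L.symm (x - z)‖ ≤ 2 := by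
  let S : Set (EuclideanSpace ℝ (Fin 2) ×
      (EuclideanSpace ℝ (Fin 2) →L[ℝ] EuclideanSpace ℝ (Fin 2))) :=
    {q | ∀ v, ‖v‖ ≤ 1 → q.1 + q.2 v ∈ K}
  have hScl : IsClosed S := by
    have : S = ⋂ v, ⋂ (_ : ‖v‖ ≤ 1), (fun q => q.1 + q.2 v) ⁻¹' K := by
      ext q; simp [S]
    rw [this]
    refine isClosed_iInter fun v => isClosed_iInter fun _ => hK.isClosed.preimage ?_
    fun_prop
  obtain ⟨C, hC0, hC⟩ : ∃ C : ℝ, 0 < C ∧ K ⊆ closedBall 0 C := by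
    obtain ⟨R, h⟩ := hK.isBounded.subset_closedBall 0
    exact ⟨max R 1, by positivity, h.trans (closedBall_subset_closedBall (le_max_left _ _))⟩
  have hSb : Bornology.IsBounded S := by
    refine (isBounded_closedBall (x := 0) (r := 2 * C)).subset ?_
    rintro ⟨z, L⟩ hq
    have hz : ‖z‖ ≤ C := by
      have := hC (hq 0 (by simp))
      simpa using this
    have hL : ‖L‖ ≤ 2 * C := by
      refine L.opNorm_le_of_unit_norm (by positivity) fun v hv => ?_
      have h1 : ‖z + L v‖ ≤ C := by simpa using hC (hq v hv.le)
      have := norm_sub_le (z + L v) z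
      rw [add_sub_cancel_left] at this
      linarith
    rw [mem_closedBall_zero_iff, Prod.norm_mk]
    exact max_le (by linarith) hL
  have : ProperSpace (EuclideanSpace ℝ (Fin 2) →L[ℝ] EuclideanSpace ℝ (Fin 2)) :=
    FiniteDimensional.proper ℝ _
  have hSc : IsCompact S := Metric.isCompact_of_isClosed_isBounded hScl hSb
  obtain ⟨c, hcK⟩ := hi
  obtain ⟨r, hr, hrK⟩ := Metric.nhds_basis_closedBall.mem_iff.1 (mem_interior_iff_mem_nhds.1 hcK)
  have hmem : (c, r • ContinuousLinearMap.id ℝ (EuclideanSpace ℝ (Fin 2))) ∈ S := by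
    intro v hv
    apply hrK
    simp [norm_smul, abs_of_pos hr]
    nlinarith
  obtain ⟨⟨z, L⟩, hS, hmax⟩ := hSc.exists_isMaxOn ⟨_, hmem⟩
    (f := fun q => |q.2.det|)
    ((ContinuousLinearMap.continuous_det.comp continuous_snd).abs.continuousOn)
  have hdet : 0 < |L.det| := by
    have := hmax hmem
    refine lt_of_lt_of_le ?_ this
    simp [ContinuousLinearMap.det, LinearMap.det_smul]
    positivity
  have hdet0 : L.det ≠ 0 := abs_pos.1 hdet
  let M := L.toContinuousLinearEquivOfDetNeZero hdet0
  have hM : ∀ v, M v = L v := fun v => rfl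
  refine ⟨z, M, fun v hv => by simpa [hM] using hS v hv, ?_⟩
  by_contra! hcon
  obtain ⟨x, hx, hx2⟩ := hcon
  let φ : EuclideanSpace ℝ (Fin 2) → EuclideanSpace ℝ (Fin 2) := fun v => z + L v
  have hφ : Continuous φ := by fun_prop
  have hKc : Convex ℝ (φ ⁻¹' K) := by
    intro u hu v hv a b ha hb hab
    have := hc hu hv ha hb hab
    simp only [mem_preimage, φ] at this ⊢
    convert this using 1
    simp only [map_add, map_smul, smul_add]
    have : z = a • z + b • z := by rw [← add_smul, hab, one_smul]
    nth_rewrite 1 [this]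
    abel
  obtain ⟨z', D, hD, hDK⟩ := ell_sub (φ ⁻¹' K) (hK.isClosed.preimage hφ) hKc
    (fun v hv => hS v (by simpa using hv)) (M.symm (x - z))
    (by simp only [mem_preimage, φ]; rw [← hM]; simpa using hx) hx2
  have hnew : (z + L z', L.comp D) ∈ S := by
    intro v hv
    have := hDK v hv
    simp only [mem_preimage, φ, map_add] at this
    simpa [add_assoc] using this
  have := hmax hnew
  have hm : (L.comp D).det = L.det * D.det := by
    simp [ContinuousLinearMap.det]
  simp only [mem_ofPred_eq, hm, abs_mul] at this
  have hD' : 1 < |D.det| := lt_of_lt_of_le hD (le_abs_self _)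
  nlinarith

theorem stmt_14 (c₀ : ℝ) (hc₀ : 0 < c₀) :
    ∃ ε : ℝ, 0 < ε ∧
    ∀ U : Set (EuclideanSpace ℝ (Fin 2)), IsOpen U → Convex ℝ U →
      Bornology.IsBounded U → U.Nonempty →
      (∀ w : EuclideanSpace ℝ (Fin 2), ‖w‖ = 1 →
        c₀ * (μH[(1:ℝ)] (frontier U)).toReal ≤
          Metric.diam ((fun x => (⟪w, x⟫ : ℝ)) '' U)) →
      ∃ (z : EuclideanSpace ℝ (Fin 2))
        (L : EuclideanSpace ℝ (Fin 2) ≃L[ℝ] EuclideanSpace ℝ (Fin 2)),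
        (fun v => z + L v) '' ball 0 1 ⊆ U ∧
        U ⊆ (fun v => z + (2:ℝ) • L v) '' ball 0 1 ∧
        ∃ R : ℝ, 0 < R ∧
          ball z (ε * R) ⊆ (fun v => z + L v) '' ball 0 1 ∧
          (fun v => z + L v) '' ball (0 : EuclideanSpace ℝ (Fin 2)) 1 ⊆ ball z R := by
  refine ⟨c₀ / 4, by positivity, fun U ho hc hb hne hproj => ?_⟩
  have hint : interior (closure U) = U := by
    rw [hc.interior_closure_eq_interior_of_nonempty_interior (by rwa [ho.interior_eq]),
      ho.interior_eq]
  obtain ⟨z, L, h1, h2⟩ := john (closure U) hb.isCompact_closure hc.closure (by rwa [hint])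
  have hQ : (fun v => z + L v) '' ball 0 1 ⊆ U := by
    conv_rhs => rw [← hint]
    apply interior_maximal
    · rintro _ ⟨v, hv, rfl⟩
      exact h1 v (mem_ball_zero_iff.1 hv).le
    · have : IsOpenMap (fun v => z + L v) :=
        (isOpenMap_add_left z).comp L.toHomeomorph.isOpenMap
      exact this _ isOpen_ball
  have hU2 : ∀ x ∈ U, ‖L.symm (x - z)‖ < 2 := by
    intro x hx
    have hop : IsOpenMap (fun x => L.symm (x - z)) :=
      L.symm.toHomeomorph.isOpenMap.comp (Homeomorph.subRight z).isOpenMap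
    have hs : (fun x => L.symm (x - z)) '' U ⊆ interior (closedBall 0 2) := by
      apply interior_maximal
      · rintro _ ⟨y, hy, rfl⟩
        simpa using h2 y (subset_closure hy)
      · exact hop _ ho
    rw [interior_closedBall _ (by norm_num)] at hs
    simpa using hs ⟨x, hx, rfl⟩
  have hLpos : 0 < ‖(L : EuclideanSpace ℝ (Fin 2) →L[ℝ] EuclideanSpace ℝ (Fin 2))‖ := by
    rw [norm_pos_iff]
    intro h
    have h3 : L (EuclideanSpace.single 0 1) = 0 := by
      have := congrArg (fun T : EuclideanSpace ℝ (Fin 2) →L[ℝ] EuclideanSpace ℝ (Fin 2) =>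
        T (EuclideanSpace.single 0 1)) h
      simpa using this
    simp at h3
  refine ⟨z, L, hQ, ?_, ‖(L : EuclideanSpace ℝ (Fin 2) →L[ℝ] EuclideanSpace ℝ (Fin 2))‖, ?_, ?_, ?_⟩
  · intro x hx
    refine ⟨(2:ℝ)⁻¹ • L.symm (x - z), ?_, ?_⟩
    · have := hU2 x hx
      rw [mem_ball_zero_iff, norm_smul]
      rw [Real.norm_of_nonneg (by norm_num)]
      linarith
    · simp
  · exact hLpos
  · -- roundness
    obtain ⟨T, hT⟩ : ∃ T, T = ContinuousLinearMap.adjoint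
      (L : EuclideanSpace ℝ (Fin 2) →L[ℝ] EuclideanSpace ℝ (Fin 2)) := ⟨_, rfl⟩
    have hTi : ∀ w v, ⟪w, L v⟫ = ⟪T w, v⟫ := by
      intro w v
      rw [hT, ContinuousLinearMap.adjoint_inner_left]; rfl
    have hTn : ‖T‖ = ‖(L : EuclideanSpace ℝ (Fin 2) →L[ℝ] EuclideanSpace ℝ (Fin 2))‖ := by
      rw [hT]; exact LinearIsometryEquiv.norm_map _ _
    rw [← hTn]
    -- upper bound for the width
    have hup : ∀ w, ‖w‖ = 1 → c₀ * (μH[(1:ℝ)] (frontier U)).toReal ≤ 4 * ‖T w‖ := by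
      intro w hw
      refine (hproj w hw).trans ?_
      have hk : ∀ x ∈ U, |⟪w, x⟫ - ⟪w, z⟫| ≤ 2 * ‖T w‖ := by
        intro x hx
        have e : ⟪w, x⟫ - ⟪w, z⟫ = ⟪T w, L.symm (x - z)⟫ := by
          rw [← hTi, L.apply_symm_apply, inner_sub_right]
        rw [e]
        have h3 := abs_real_inner_le_norm (T w) (L.symm (x - z))
        have h4 := hU2 x hx
        have h5 := norm_nonneg (T w)
        nlinarith
      refine Metric.diam_le_of_forall_dist_le (by positivity) ?_
      rintro _ ⟨x, hx, rfl⟩ _ ⟨y, hy, rfl⟩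
      have h3 := abs_le.1 (hk x hx)
      have h4 := abs_le.1 (hk y hy)
      rw [Real.dist_eq, abs_le]
      constructor <;> linarith [h3.1, h3.2, h4.1, h4.2]
    have hlow : ‖T‖ ≤ (μH[(1:ℝ)] (frontier U)).toReal := by
      refine T.opNorm_le_of_unit_norm ENNReal.toReal_nonneg fun w hw => ?_
      by_cases h0 : T w = 0
      · rw [h0, norm_zero]; exact ENNReal.toReal_nonneg
      have h0' : 0 < ‖T w‖ := norm_pos_iff.2 h0
      have hv : ∀ t : ℝ, |t| < 1 → z + L ((t * ‖T w‖⁻¹) • T w) ∈ U := by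
        intro t ht
        refine hQ ⟨_, ?_, rfl⟩
        rw [mem_ball_zero_iff, norm_smul, norm_mul, norm_inv, norm_norm, Real.norm_eq_abs]
        field_simp
        exact ht
      have h3 := perim_ge U ho hc hb w hw _ _ (hv (-(1/2)) (by norm_num [abs_lt]))
        (hv (1/2) (by norm_num [abs_lt]))
      simp only [inner_add_right, hTi, inner_smul_right, real_inner_self_eq_norm_sq] at h3
      have e : ‖T w‖⁻¹ * ‖T w‖ ^ 2 = ‖T w‖ := by field_simp
      linarith [e]
    intro x hx
    refine ⟨L.symm (x - z), ?_, by simp⟩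
    rw [mem_ball_iff_norm] at hx
    rw [mem_ball_zero_iff]
    by_contra! hcon
    obtain ⟨u, hu⟩ : ∃ u, u = L.symm (x - z) := ⟨_, rfl⟩
    rw [← hu] at hcon
    have hLu : L u = x - z := by rw [hu]; simp
    have hlb : ∀ w, c₀ * ‖T‖ * ‖w‖ ≤ 4 * ‖T w‖ := by
      intro w
      by_cases hw : w = 0
      · simp [hw]
      have hw' : 0 < ‖w‖ := norm_pos_iff.2 hw
      have h3 := hup (‖w‖⁻¹ • w) (by simp [norm_smul, hw'.ne'])
      rw [map_smul, norm_smul, norm_inv, norm_norm] at h3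
      have h4 : c₀ * ‖T‖ ≤ 4 * (‖w‖⁻¹ * ‖T w‖) := (mul_le_mul_of_nonneg_left hlow hc₀.le).trans h3
      calc c₀ * ‖T‖ * ‖w‖ ≤ 4 * (‖w‖⁻¹ * ‖T w‖) * ‖w‖ := by gcongr
        _ = 4 * ‖T w‖ := by field_simp
    obtain ⟨w, hw⟩ : ∃ w, T w = u := by
      refine ⟨ContinuousLinearMap.adjoint
        (L.symm : EuclideanSpace ℝ (Fin 2) →L[ℝ] EuclideanSpace ℝ (Fin 2)) u, ?_⟩
      refine ext_inner_right ℝ fun v => ?_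
      rw [← hTi, ContinuousLinearMap.adjoint_inner_left]
      simp
    have h3 := hTi w u
    rw [hw, real_inner_self_eq_norm_sq, hLu] at h3
    have h4 := real_inner_le_norm w (x - z)
    have h5 := hlb w
    rw [hw] at h5
    have hw0 : 0 < ‖w‖ := by
      rw [norm_pos_iff]; rintro rfl
      rw [map_zero] at hw
      rw [← hw, norm_zero] at hcon
      linarith
    nlinarith
  · rintro _ ⟨v, hv, rfl⟩
    rw [mem_ball_zero_iff] at hv
    have h3 := (L : EuclideanSpace ℝ (Fin 2) →L[ℝ] EuclideanSpace ℝ (Fin 2)).le_opNorm v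
    rw [mem_ball_iff_norm, add_sub_cancel_left]
    rw [ContinuousLinearEquiv.coe_coe] at h3
    nlinarith
end
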